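/- arXiv:1810.01034 — 8 statements merged into one kernel-verified Lean document; each statement's English description precedes it below -/
import Mathlib

section
/- Let k be a field with char k ≠ 2, let V be a finite-dimensional k-vector space with a nondegenerate alternating bilinear form ⟨·,·⟩, and let N be a skew-adjoint nilpotent endomorphism of V. Then for every odd integer i ≥ 1, the number of Jordan blocks of N of size i is even; equivalently, dim ker(N^{i−1}) + dim ker(N^{i+1}) is even (the number of Jordan blocks of size i equals 2·dim ker(N^i) − dim ker(N^{i−1}) − dim ker(N^{i+1})). -/
theorem even_of_nondeg_alt {k W : Type*} [Field k] (hchar : (2 : k) ≠ 0) [AddCommGroup W]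
    [Module k W] [FiniteDimensional k W] (C : LinearMap.BilinForm k W)
    (halt : ∀ x, C x x = 0) (hnd : ∀ x, (∀ y, C x y = 0) → x = 0) :
    Even (Module.finrank k W) := by
  by_contra hodd
  rw [Nat.not_even_iff_odd] at hodd
  let b := Module.finBasis k W
  have hsk : ∀ x y, C y x = - C x y := by
    intro x y
    have h := halt (x + y)
    simp only [map_add, LinearMap.add_apply, halt] at h
    linear_combination h
  have hC : C.Nondegenerate := by
    refine ⟨hnd, fun y hy => hnd y fun x => ?_⟩
    rw [hsk x y, hy x, neg_zero]
  have hdet := (LinearMap.BilinForm.nondegenerate_iff_det_ne_zero b).mp hC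
  have hT : (LinearMap.BilinForm.toMatrix b C).transpose = - LinearMap.BilinForm.toMatrix b C := by
    ext i j
    simp [LinearMap.BilinForm.toMatrix_apply, hsk (b i) (b j)]
  have h1 := congrArg Matrix.det hT
  rw [Matrix.det_transpose, Matrix.det_neg, Fintype.card_fin, hodd.neg_one_pow] at h1
  apply hdet
  have : 2 * (LinearMap.BilinForm.toMatrix b C).det = 0 := by linear_combination h1
  exact (mul_eq_zero.mp this).resolve_left hchar

theorem even_rank_alt {k V : Type*} [Field k] (hchar : (2 : k) ≠ 0) [AddCommGroup V]
    [Module k V] [FiniteDimensional k V] (C : LinearMap.BilinForm k V)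
    (halt : ∀ x, C x x = 0) (K : Submodule k V) (hK : ∀ x, x ∈ K ↔ ∀ y, C x y = 0) :
    Even (Module.finrank k V + Module.finrank k K) := by
  obtain ⟨W, hW⟩ := exists_isCompl K
  have hsk : ∀ x y, C y x = - C x y := by
    intro x y
    have h := halt (x + y)
    simp only [map_add, LinearMap.add_apply, halt] at h
    linear_combination h
  have h2 : Even (Module.finrank k W) := by
    refine even_of_nondeg_alt hchar (C.restrict W) (fun x => halt x) ?_
    intro x hx
    have hxK : (x : V) ∈ K := by
      rw [hK]
      intro y
      have hy : y ∈ K ⊔ W := by rw [hW.sup_eq_top]; trivial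
      obtain ⟨u, hu, w, hw, rfl⟩ := Submodule.mem_sup.mp hy
      rw [map_add, hsk u, (hK u).mp hu, neg_zero, zero_add]
      exact hx ⟨w, hw⟩
    have := Submodule.disjoint_def.mp hW.disjoint x hxK x.2
    exact Subtype.ext this
  have h3 := Submodule.finrank_add_eq_of_isCompl hW
  rw [← h3]
  obtain ⟨r, hr⟩ := h2
  exact ⟨Module.finrank k K + r, by omega⟩

theorem even_ker_pow {k V : Type*} [Field k] (hchar : (2 : k) ≠ 0) [AddCommGroup V]
    [Module k V] [FiniteDimensional k V] (B : V →ₗ[k] V →ₗ[k] k)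
    (hBnd : ∀ x : V, (∀ y : V, B x y = 0) → x = 0)
    (halt : ∀ x : V, B x x = 0)
    (N : Module.End k V)
    (hskew : ∀ x y : V, B (N x) y = - B x (N y)) (m : ℕ) :
    Even (Module.finrank k V + Module.finrank k (LinearMap.ker (N ^ (2 * m)))) := by
  have hp : ∀ (j : ℕ) (x y : V), B ((N ^ j) x) y = (-1) ^ j * B x ((N ^ j) y) := by
    intro j
    induction j with
    | zero => simp
    | succ j ih =>
      intro x y
      rw [pow_succ, Module.End.mul_apply, ih, hskew, ← Module.End.mul_apply N,
        ← pow_succ', ← pow_succ]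
      ring
  refine even_rank_alt hchar (B.comp (N ^ (2 * m))) ?_ _ ?_
  · intro x
    rw [LinearMap.comp_apply, two_mul, pow_add, Module.End.mul_apply, hp, halt, mul_zero]
  · intro x
    rw [LinearMap.mem_ker]
    refine ⟨fun h y => ?_, fun h => hBnd _ h⟩
    rw [LinearMap.comp_apply, h, map_zero, LinearMap.zero_apply]

/-- For a skew-adjoint nilpotent endomorphism of a finite-dimensional vector space with a
nondegenerate alternating bilinear form (char ≠ 2), every odd Jordan block size occurs with
even multiplicity; the multiplicity of size `i` is
`2 * dim ker N^i - dim ker N^(i-1) - dim ker N^(i+1)`, and equivalently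
`dim ker N^(i-1) + dim ker N^(i+1)` is even. -/
theorem stmt0 (k : Type*) [Field k] (hchar : (2 : k) ≠ 0)
    (V : Type*) [AddCommGroup V] [Module k V] [FiniteDimensional k V]
    (B : V →ₗ[k] V →ₗ[k] k)
    (hBnd : ∀ x : V, (∀ y : V, B x y = 0) → x = 0)
    (halt : ∀ x : V, B x x = 0)
    (N : Module.End k V)
    (hskew : ∀ x y : V, B (N x) y = - B x (N y))
    (hnil : IsNilpotent N)
    (i : ℕ) (hodd : Odd i) (hi : 1 ≤ i) :
    Even (2 * Module.finrank k ↥(LinearMap.ker (N ^ i))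
        - Module.finrank k ↥(LinearMap.ker (N ^ (i - 1)))
        - Module.finrank k ↥(LinearMap.ker (N ^ (i + 1)))) ∧
    Even (Module.finrank k ↥(LinearMap.ker (N ^ (i - 1)))
        + Module.finrank k ↥(LinearMap.ker (N ^ (i + 1)))) := by

  obtain ⟨m, rfl⟩ := hodd
  have h1 := even_ker_pow hchar B hBnd halt N hskew m
  have h2 := even_ker_pow hchar B hBnd halt N hskew (m + 1)
  have e1 : 2 * m + 1 - 1 = 2 * m := by omega
  have e2 : 2 * m + 1 + 1 = 2 * (m + 1) := by omega
  rw [e1, e2]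
  rw [Nat.even_iff] at *
  rw [Nat.even_iff]
  omega
end

section
/- Let k be a field with char k ≠ 2, let V be a finite-dimensional k-vector space with a nondegenerate symmetric bilinear form ⟨·,·⟩, and let N be a skew-adjoint nilpotent endomorphism of V. Then for every even integer i ≥ 2, the number of Jordan blocks of N of size i is even; equivalently, dim ker(N^{i−1}) + dim ker(N^{i+1}) is even (the number of Jordan blocks of size i equals 2·dim ker(N^i) − dim ker(N^{i−1}) − dim ker(N^{i+1})). -/
theorem even_finrank_aux {k : Type*} [Field k] (hchar : (2 : k) ≠ 0)
    {W : Type*} [AddCommGroup W] [Module k W] [FiniteDimensional k W]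
    (A : W →ₗ[k] W →ₗ[k] k) (hnd : ∀ x, (∀ y, A x y = 0) → x = 0)
    (hA : ∀ x y, A x y = - A y x) : Even (Module.finrank k W) := by
  classical
  let b := Module.finBasis k W
  let M : Matrix (Fin (Module.finrank k W)) (Fin (Module.finrank k W)) k :=
    Matrix.of fun i j => A (b i) (b j)
  have hT : M.transpose = -M := by
    ext i j
    exact hA _ _
  have hdet : M.det ≠ 0 := by
    intro h0
    obtain ⟨v, hv, hvM⟩ := Matrix.exists_vecMul_eq_zero_iff.mpr h0
    apply hv
    have hx : (∑ i, v i • b i) = 0 := by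
      apply hnd
      have : A (∑ i, v i • b i) = 0 := by
        apply b.ext
        intro j
        have := congrFun hvM j
        simpa [Matrix.vecMul, dotProduct, M] using this
      intro y
      rw [this]; rfl
    funext i
    exact Fintype.linearIndependent_iff.mp b.linearIndependent v hx i
  by_contra hodd
  rw [Nat.not_even_iff_odd] at hodd
  have h := Matrix.det_transpose M
  rw [hT, Matrix.det_neg, Fintype.card_fin, hodd.neg_one_pow] at h
  apply hdet
  have h2 : (2 : k) * M.det = 0 := by linear_combination -h
  exact (mul_eq_zero.mp h2).resolve_left hchar

theorem even_ker_aux {k : Type*} [Field k] (hchar : (2 : k) ≠ 0)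
    {V : Type*} [AddCommGroup V] [Module k V] [FiniteDimensional k V]
    (B : V →ₗ[k] V →ₗ[k] k)
    (hBnd : ∀ x : V, (∀ y : V, B x y = 0) → x = 0)
    (hsymm : ∀ x y : V, B x y = B y x)
    (T : Module.End k V)
    (hskew : ∀ x y : V, B (T x) y = - B x (T y)) :
    ∃ r, Module.finrank k V = Module.finrank k (LinearMap.ker T) + 2 * r := by
  obtain ⟨W, hW⟩ := Submodule.exists_isCompl (LinearMap.ker T)
  have hE : Even (Module.finrank k W) := by
    have hs : ∀ x y : V, B (T x) y = - B (T y) x := fun x y => by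
      rw [hskew, hsymm]
    apply even_finrank_aux hchar ((B.comp T).domRestrict₁₂ W W)
    · intro x hx
      have hxk : (x : V) ∈ LinearMap.ker T := by
        rw [LinearMap.mem_ker]
        apply hBnd
        intro y
        have hy : y ∈ LinearMap.ker T ⊔ W := by rw [hW.sup_eq_top]; trivial
        obtain ⟨u, hu, w, hw, rfl⟩ := Submodule.mem_sup.mp hy
        have h1 : B (T x) w = 0 := hx ⟨w, hw⟩
        have h2 : B (T x) u = 0 := by
          rw [hs, LinearMap.mem_ker.mp hu]; simp
        rw [map_add, h1, h2, add_zero]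
      exact Subtype.ext (Submodule.disjoint_def.mp hW.disjoint _ hxk x.2)
    · intro x y
      exact hs x y
  obtain ⟨r, hr⟩ := hE
  refine ⟨r, ?_⟩
  rw [← Submodule.finrank_add_eq_of_isCompl hW, hr]
  ring

theorem skew_pow_aux {k : Type*} [Field k]
    {V : Type*} [AddCommGroup V] [Module k V]
    (B : V →ₗ[k] V →ₗ[k] k) (N : Module.End k V)
    (hskew : ∀ x y : V, B (N x) y = - B x (N y)) (n : ℕ) :
    ∀ x y : V, B ((N ^ n) x) y = (-1) ^ n * B x ((N ^ n) y) := by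
  induction n with
  | zero => simp
  | succ n ih =>
    intro x y
    rw [pow_succ, Module.End.mul_apply, ih, hskew, ← Module.End.mul_apply N, ← pow_succ',
      ← pow_succ]
    ring

/-- For a skew-adjoint nilpotent endomorphism of a finite-dimensional vector space with a
nondegenerate symmetric bilinear form (char ≠ 2), every even Jordan block size occurs with
even multiplicity; the multiplicity of size `i` is
`2 * dim ker N^i - dim ker N^(i-1) - dim ker N^(i+1)`, and equivalently
`dim ker N^(i-1) + dim ker N^(i+1)` is even. -/
theorem stmt1 (k : Type*) [Field k] (hchar : (2 : k) ≠ 0)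
    (V : Type*) [AddCommGroup V] [Module k V] [FiniteDimensional k V]
    (B : V →ₗ[k] V →ₗ[k] k)
    (hBnd : ∀ x : V, (∀ y : V, B x y = 0) → x = 0)
    (hsymm : ∀ x y : V, B x y = B y x)
    (N : Module.End k V)
    (hskew : ∀ x y : V, B (N x) y = - B x (N y))
    (hnil : IsNilpotent N)
    (i : ℕ) (heven : Even i) (hi : 2 ≤ i) :
    Even (2 * Module.finrank k ↥(LinearMap.ker (N ^ i))
        - Module.finrank k ↥(LinearMap.ker (N ^ (i - 1)))
        - Module.finrank k ↥(LinearMap.ker (N ^ (i + 1)))) ∧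
    Even (Module.finrank k ↥(LinearMap.ker (N ^ (i - 1)))
        + Module.finrank k ↥(LinearMap.ker (N ^ (i + 1)))) := by

  have key : ∀ j, Odd j → ∃ r, Module.finrank k V =
      Module.finrank k ↥(LinearMap.ker (N ^ j)) + 2 * r := fun j hj =>
    even_ker_aux hchar B hBnd hsymm (N ^ j) fun x y => by
      rw [skew_pow_aux B N hskew, hj.neg_one_pow, neg_one_mul]
  obtain ⟨m, hm⟩ := heven
  obtain ⟨r, hr⟩ := key (i - 1) ⟨m - 1, by omega⟩
  obtain ⟨s, hs⟩ := key (i + 1) ⟨m, by omega⟩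
  simp only [Nat.even_iff]
  omega
end

section
/- Let k be a field with char k ≠ 2, let V be a k-vector space of dimension 2n with a nondegenerate alternating bilinear form ⟨·,·⟩, and let λ = (λ₁ ≥ λ₂ ≥ ⋯) be a partition of 2n in which every odd part occurs with even multiplicity. Then there exists a skew-adjoint nilpotent endomorphism N of V with Jordan type λ, i.e., dim ker(N^t) = ∑_j min(t, λ_j) for all t ≥ 0. -/
namespace SympNil

universe u v w

/-- The standard antidiagonal form with alternating signs on `k^(m+1)`. -/
noncomputable def antiForm (k : Type u) [Field k] (m : ℕ) :
    (Fin (m + 1) → k) →ₗ[k] (Fin (m + 1) → k) →ₗ[k] k :=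
  LinearMap.mk₂ k (fun x y => ∑ i : Fin (m + 1), (-1) ^ (i : ℕ) * (x i * y i.rev))
    (by intro x x' y; simp only [Pi.add_apply, ← Finset.sum_add_distrib]
        exact Finset.sum_congr rfl fun i _ => by ring)
    (by intro c x y; simp only [Pi.smul_apply, smul_eq_mul, Finset.mul_sum]
        exact Finset.sum_congr rfl fun i _ => by ring)
    (by intro x y y'; simp only [Pi.add_apply, ← Finset.sum_add_distrib]
        exact Finset.sum_congr rfl fun i _ => by ring)
    (by intro c x y; simp only [Pi.smul_apply, smul_eq_mul, Finset.mul_sum]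
        exact Finset.sum_congr rfl fun i _ => by ring)

theorem antiForm_apply (k : Type u) [Field k] (m : ℕ) (x y : Fin (m + 1) → k) :
    antiForm k m x y = ∑ i : Fin (m + 1), (-1) ^ (i : ℕ) * (x i * y i.rev) := rfl

/-- The shift. -/
def shift (k : Type u) [Field k] (m : ℕ) : Module.End k (Fin (m + 1) → k) where
  toFun x i := if h : (i : ℕ) + 1 < m + 1 then x ⟨i + 1, h⟩ else 0
  map_add' x y := by
    ext i
    by_cases h : (i : ℕ) < m <;> simp [h]
  map_smul' c x := by
    ext i
    by_cases h : (i : ℕ) < m <;> simp [h]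

theorem shift_apply (k : Type u) [Field k] (m : ℕ) (x : Fin (m + 1) → k) (i) :
    shift k m x i = if h : (i : ℕ) + 1 < m + 1 then x ⟨i + 1, h⟩ else 0 := rfl

theorem shift_pow_apply (k : Type u) [Field k] (m : ℕ) (t : ℕ) (x : Fin (m + 1) → k) (i) :
    (shift k m ^ t) x i = if h : (i : ℕ) + t < m + 1 then x ⟨i + t, h⟩ else 0 := by
  induction t generalizing i with
  | zero => rw [dif_pos (by omega)]; rfl
  | succ t ih =>
    rw [pow_succ', Module.End.mul_apply, shift_apply]
    by_cases h : (i : ℕ) + 1 < m + 1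
    · rw [dif_pos h, ih]
      simp only [add_assoc, add_comm 1 t]
    · rw [dif_neg h, dif_neg (by omega)]

theorem finrank_ker_shift (k : Type u) [Field k] (m t : ℕ) :
    Module.finrank k (LinearMap.ker (shift k m ^ t)) = min t (m + 1) := by
  classical
  let I : Set (Fin (m + 1)) := {i | (i : ℕ) < t}
  have hk : LinearMap.ker (shift k m ^ t) =
      ⨅ i ∈ Iᶜ, LinearMap.ker (LinearMap.proj (R := k) (φ := fun _ : Fin (m + 1) => k) i) := by
    ext x
    simp only [LinearMap.mem_ker, Submodule.mem_iInf, LinearMap.proj_apply]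
    constructor
    · intro h i hi
      have hi' : t ≤ (i : ℕ) := by simpa [I] using hi
      have := congrFun h ⟨(i : ℕ) - t, by omega⟩
      rw [shift_pow_apply] at this
      have hlt : (i : ℕ) - t + t < m + 1 := by omega
      simp only [hlt, dif_pos, Pi.zero_apply] at this
      rw [← this]
      congr 1
      ext
      simp; omega
    · intro h
      ext i
      rw [shift_pow_apply]
      split_ifs with hi
      · exact h _ (by simp [I])
      · rfl
  rw [hk, (LinearMap.iInfKerProjEquiv k (fun _ => k) (I := I) (J := Iᶜ)
    disjoint_compl_right (by simp)).finrank_eq, Module.finrank_pi]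
  have : Fintype.card I = (Finset.univ.filter fun i : Fin (m + 1) => (i : ℕ) < t).card := by
    rw [Fintype.card_subtype]
    rfl
  rw [this, Fin.card_filter_val_lt, min_comm]

theorem antiForm_skew (k : Type u) [Field k] (m : ℕ) (x y : Fin (m + 1) → k) :
    antiForm k m (shift k m x) y = - antiForm k m x (shift k m y) := by
  rw [antiForm_apply, antiForm_apply, Fin.sum_univ_castSucc, Fin.sum_univ_succ]
  have h1 : shift k m x (Fin.last m) = 0 := by rw [shift_apply, dif_neg (by simp)]
  have h2 : shift k m y (Fin.rev 0) = 0 := by rw [shift_apply, dif_neg (by simp)]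
  rw [h1, h2]
  simp only [zero_mul, mul_zero, add_zero, zero_add]
  rw [← Finset.sum_neg_distrib]
  refine Finset.sum_congr rfl fun i _ => ?_
  have h3 : shift k m x i.castSucc = x i.succ := by
    rw [shift_apply, dif_pos (by simp)]; rfl
  have h4 : shift k m y i.succ.rev = y i.castSucc.rev := by
    rw [shift_apply, dif_pos (by rw [Fin.val_rev, Fin.val_succ]; omega)]
    congr 1; ext; simp [Fin.val_rev]; omega
  rw [h3, h4]
  simp [pow_succ]

theorem antiForm_nondeg (k : Type u) [Field k] (m : ℕ) (x : Fin (m + 1) → k)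
    (h : ∀ y, antiForm k m x y = 0) : x = 0 := by
  ext i
  have := h (Pi.single i.rev 1)
  rw [antiForm_apply, Finset.sum_eq_single i] at this
  · simpa using this
  · intro j _ hj
    have : j.rev ≠ i.rev := fun h => hj (Fin.rev_injective h)
    simp [this]
  · simp

theorem antiForm_swap (k : Type u) [Field k] (m : ℕ) (x y : Fin (m + 1) → k) :
    antiForm k m x y = (-1) ^ m * antiForm k m y x := by
  rw [antiForm_apply, antiForm_apply, ← Equiv.sum_comp Fin.revPerm, Finset.mul_sum]
  refine Finset.sum_congr rfl fun i _ => ?_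
  simp only [Fin.revPerm_apply, Fin.rev_rev]
  have : (-1 : k) ^ (i.rev : ℕ) = (-1) ^ m * (-1) ^ (i : ℕ) := by
    have : m + (i : ℕ) = i.rev + 2 * i := by rw [Fin.val_rev]; omega
    rw [← pow_add, this, pow_add, pow_mul]; simp
  rw [this]; ring

/-- Existence of a symplectic space with a skew-adjoint endomorphism of given Jordan type. -/
def HasModel (k : Type u) [Field k] (s : Multiset ℕ) : Prop :=
  ∃ (W : Type u) (_ : AddCommGroup W) (_ : Module k W) (_ : FiniteDimensional k W)
    (C : W →ₗ[k] W →ₗ[k] k) (N : Module.End k W),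
    (∀ x, (∀ y, C x y = 0) → x = 0) ∧ (∀ x, C x x = 0) ∧ (∀ x y, C (N x) y = - C x (N y)) ∧
    (∀ t : ℕ, Module.finrank k (LinearMap.ker (N ^ t)) = (s.map fun p => min t p).sum) ∧
    Module.finrank k W = s.sum

theorem finrank_ker_prodMap_pow (k : Type u) [Field k] {V : Type v} {W : Type w}
    [AddCommGroup V] [Module k V] [FiniteDimensional k V]
    [AddCommGroup W] [Module k W] [FiniteDimensional k W]
    (N : Module.End k V) (M : Module.End k W) (t : ℕ) :
    Module.finrank k (LinearMap.ker ((N.prodMap M : Module.End k (V × W)) ^ t)) =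
      Module.finrank k (LinearMap.ker (N ^ t)) + Module.finrank k (LinearMap.ker (M ^ t)) := by
  have : (N.prodMap M : Module.End k (V × W)) ^ t = (N ^ t).prodMap (M ^ t) := by
    induction t with
    | zero => rfl
    | succ t ih => rw [pow_succ, ih]; rfl
  rw [this, LinearMap.ker_prodMap, ← Module.finrank_prod]
  let e : ((LinearMap.ker (N ^ t)).prod (LinearMap.ker (M ^ t))) ≃ₗ[k]
      LinearMap.ker (N ^ t) × LinearMap.ker (M ^ t) :=
    { toFun := fun z => (⟨z.1.1, z.2.1⟩, ⟨z.1.2, z.2.2⟩)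
      invFun := fun z => ⟨(z.1, z.2), ⟨z.1.2, z.2.2⟩⟩
      map_add' := fun _ _ => rfl
      map_smul' := fun _ _ => rfl
      left_inv := fun _ => rfl
      right_inv := fun _ => rfl }
  exact e.finrank_eq

theorem HasModel.add {k : Type u} [Field k] {s s' : Multiset ℕ}
    (h : HasModel k s) (h' : HasModel k s') : HasModel k (s + s') := by
  obtain ⟨V, _, _, _, B, N, h1, h2, h3, h4, h5⟩ := h
  obtain ⟨W, _, _, _, C, M, g1, g2, g3, g4, g5⟩ := h'
  refine ⟨V × W, inferInstance, inferInstance, inferInstance,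
    B.compl₁₂ (LinearMap.fst k V W) (LinearMap.fst k V W) +
    C.compl₁₂ (LinearMap.snd k V W) (LinearMap.snd k V W), N.prodMap M, ?_, ?_, ?_, ?_, ?_⟩
  · rintro ⟨x, y⟩ h
    ext
    · exact h1 x fun z => by simpa using h (z, 0)
    · exact g1 y fun z => by simpa using h (0, z)
  · rintro ⟨x, y⟩; simp [h2, g2]
  · rintro ⟨x, y⟩ ⟨x', y'⟩; simp [h3, g3]; ring
  · intro t
    rw [finrank_ker_prodMap_pow, h4, g4]; simp
  · simp [h5, g5]

theorem hasModel_zero (k : Type u) [Field k] : HasModel k 0 := by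
  refine ⟨PUnit, inferInstance, inferInstance, inferInstance, 0, 0, ?_, ?_, ?_, ?_, ?_⟩
  · intro x _; rfl
  · simp
  · simp
  · intro t; exact Module.finrank_zero_of_subsingleton
  · exact Module.finrank_zero_of_subsingleton

theorem hasModel_even (k : Type u) [Field k] (m : ℕ) (hm : Odd m) : HasModel k {m + 1} := by
  refine ⟨Fin (m + 1) → k, inferInstance, inferInstance, inferInstance, antiForm k m, shift k m,
    antiForm_nondeg k m, ?_, antiForm_skew k m, ?_, ?_⟩
  · intro x
    rw [antiForm_apply]
    refine Finset.sum_involution (fun i _ => i.rev) ?_ ?_ ?_ ?_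
    · intro i _
      have : (-1 : k) ^ (i.rev : ℕ) = (-1) ^ m * (-1) ^ (i : ℕ) := by
        have : m + (i : ℕ) = i.rev + 2 * i := by rw [Fin.val_rev]; omega
        rw [← pow_add, this, pow_add, pow_mul]; simp
      rw [this, hm.neg_one_pow, Fin.rev_rev]; ring
    · intro i _ _ h
      have := congrArg Fin.val h
      rw [Fin.val_rev] at this
      obtain ⟨a, rfl⟩ := hm
      omega
    · simp
    · simp
  · intro t; simp [finrank_ker_shift]
  · simp

theorem hasModel_odd (k : Type u) [Field k] (m : ℕ) (hm : Even m) :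
    HasModel k ({m + 1} + {m + 1}) := by
  let W := Fin (m + 1) → k
  refine ⟨W × W, inferInstance, inferInstance, inferInstance,
    (antiForm k m).compl₁₂ (LinearMap.fst k W W) (LinearMap.snd k W W) -
    (antiForm k m).compl₁₂ (LinearMap.snd k W W) (LinearMap.fst k W W),
    (shift k m).prodMap (shift k m), ?_, ?_, ?_, ?_, ?_⟩
  · rintro ⟨x, y⟩ h
    ext1
    · exact antiForm_nondeg k m x fun z => by simpa using h (0, z)
    · exact antiForm_nondeg k m y fun z => by simpa using h (z, 0)
  · rintro ⟨x, y⟩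
    simp [antiForm_swap k m x y, hm.neg_one_pow]
  · rintro ⟨x, y⟩ ⟨x', y'⟩
    simp [antiForm_skew k m x y', antiForm_skew k m y x']; ring
  · intro t
    rw [finrank_ker_prodMap_pow, finrank_ker_shift]; simp
  · simp [W]

theorem hasModel (k : Type u) [Field k] (s : Multiset ℕ) (h0 : 0 ∉ s)
    (hs : ∀ j, Odd j → Even (s.count j)) : HasModel k s := by
  induction hc : s.card using Nat.strong_induction_on generalizing s with
  | _ c ih =>
  subst hc
  rcases s.empty_or_exists_mem with rfl | ⟨p, hp⟩
  · exact hasModel_zero k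
  have hp0 : p ≠ 0 := fun h => h0 (h ▸ hp)
  obtain ⟨m, rfl⟩ := Nat.exists_eq_succ_of_ne_zero hp0
  obtain ⟨s', rfl⟩ := Multiset.exists_cons_of_mem hp
  rcases Nat.even_or_odd m with hm | hm
  · have hodd : Odd (m.succ) := hm.add_one
    have h1 := hs _ hodd
    have hmem : m.succ ∈ s' := by
      by_contra h
      simp [Multiset.count_eq_zero_of_notMem h] at h1
    obtain ⟨s, rfl⟩ := Multiset.exists_cons_of_mem hmem
    have := (hasModel_odd k m hm).add (ih s.card (by simp) s
      (fun h => h0 (by simp [h])) (fun j hj => ?_) rfl)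
    · simpa [add_assoc] using this
    · have := hs j hj
      rw [Multiset.count_cons, Multiset.count_cons] at this
      split_ifs at this
      · rw [add_assoc] at this
        exact (Nat.even_add.mp this).mpr (by decide)
      · simpa using this
  · have := (hasModel_even k m hm).add (ih s'.card (by simp) s'
      (fun h => h0 (by simp [h])) (fun j hj => ?_) rfl)
    · simpa using this
    · have := hs j hj
      rwa [Multiset.count_cons_of_ne] at this
      rintro rfl
      exact (Nat.not_odd_iff_even.mpr hm.add_one) hj

/-- Splitting off a hyperbolic plane. -/
theorem split (k : Type u) [Field k] {V : Type v} [AddCommGroup V] [Module k V]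
    [FiniteDimensional k V] (B : V →ₗ[k] V →ₗ[k] k)
    (hB : ∀ x, (∀ y, B x y = 0) → x = 0) (ha : ∀ x, B x x = 0) (hd : Module.finrank k V ≠ 0) :
    ∃ (U : Submodule k V) (e : V ≃ₗ[k] (k × k) × U),
      (∀ v v', B v v' = (e v).1.1 * (e v').1.2 - (e v).1.2 * (e v').1.1
        + B (e v).2 (e v').2) ∧
      (∀ x : U, (∀ y : U, B x y = 0) → x = 0) := by
  have hsw : ∀ x y, B x y = - B y x := by
    intro x y
    have := ha (x + y)
    simp [ha] at this
    linear_combination this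
  obtain ⟨x, hx⟩ : ∃ x : V, x ≠ 0 := by
    by_contra! h
    have : Subsingleton V := ⟨fun a b => by rw [h a, h b]⟩
    exact hd Module.finrank_zero_of_subsingleton
  obtain ⟨y, hxy⟩ : ∃ y, B x y = 1 := by
    by_contra! h
    refine hx (hB x fun y => ?_)
    by_contra hne
    exact h ((B x y)⁻¹ • y) (by simp [hne])
  have hyx : B y x = -1 := by rw [hsw, hxy]
  let U : Submodule k V := LinearMap.ker (B x) ⊓ LinearMap.ker (B y)
  have hU : ∀ w : U, B x w = 0 ∧ B y w = 0 := fun w => w.2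
  let p : V →ₗ[k] V := LinearMap.id + (B y).smulRight x - (B x).smulRight y
  have hp : ∀ v, p v = v + B y v • x - B x v • y := fun v => rfl
  have hpU : ∀ v, p v ∈ U := by
    intro v
    refine ⟨?_, ?_⟩ <;> simp [hp, ha, hxy, hyx]
  let e : V ≃ₗ[k] (k × k) × U :=
    { toLinearMap := ((-(B y)).prod (B x)).prod (p.codRestrict U hpU)
      invFun := fun z => z.1.1 • x + z.1.2 • y + z.2
      left_inv := by
        intro v
        simp [hp]
      right_inv := by
        rintro ⟨⟨a, b⟩, w⟩
        have h1 := (hU w).1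
        have h2 := (hU w).2
        refine Prod.ext (Prod.ext ?_ ?_) (Subtype.ext ?_) <;>
          simp [hp, ha, hxy, hyx, h1, h2] }
  have he : ∀ v, e v = ((- B y v, B x v), ⟨p v, hpU v⟩) := fun v => rfl
  have hform : ∀ v v', B v v' = (e v).1.1 * (e v').1.2 - (e v).1.2 * (e v').1.1
        + B (e v).2 (e v').2 := by
    intro v v'
    simp only [he, hp]
    simp [ha, hxy, hyx, hsw v x, hsw v y]
    ring
  refine ⟨U, e, hform, fun w hw => ?_⟩
  refine Subtype.ext (hB _ fun v => ?_)
  rw [hform]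
  have h1 := (hU w).1
  have h2 := (hU w).2
  simp only [he, h1, h2, hp w]
  have := hw ⟨p v, hpU v⟩
  simpa using this

theorem exists_isometry (k : Type u) [Field k] (d : ℕ) :
    ∀ {V : Type v} {W : Type w} [AddCommGroup V] [Module k V]
    [FiniteDimensional k V] [AddCommGroup W] [Module k W] [FiniteDimensional k W]
    (B : V →ₗ[k] V →ₗ[k] k) (C : W →ₗ[k] W →ₗ[k] k)
    (_ : ∀ x, (∀ y, B x y = 0) → x = 0) (_ : ∀ x, B x x = 0)
    (_ : ∀ x, (∀ y, C x y = 0) → x = 0) (_ : ∀ x, C x x = 0)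
    (_ : Module.finrank k V = d) (_ : Module.finrank k W = d),
    ∃ e : V ≃ₗ[k] W, ∀ x y, C (e x) (e y) = B x y := by
  induction d using Nat.strong_induction_on with
  | _ d ih =>
  intro V W _ _ _ _ _ _ B C hB haB hC haC hV hW
  by_cases hd : d = 0
  · subst hd
    have := Module.finrank_zero_iff.mp hV
    refine ⟨LinearEquiv.ofFinrankEq V W (hV.trans hW.symm), fun x y => ?_⟩
    rw [Subsingleton.elim x 0]; simp
  obtain ⟨U, e, h1, h2⟩ := split k B hB haB (hV ▸ hd)
  obtain ⟨U', e', g1, g2⟩ := split k C hC haC (hW ▸ hd)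
  have r1 := e.finrank_eq
  have r2 := e'.finrank_eq
  simp only [Module.finrank_prod, Module.finrank_self] at r1 r2
  obtain ⟨f, hf⟩ := ih (Module.finrank k U) (by omega) (V := U) (W := U')
    (B.compl₁₂ U.subtype U.subtype) (C.compl₁₂ U'.subtype U'.subtype)
    (fun x hx => h2 x (by simpa using hx)) (fun x => haB x)
    (fun x hx => g2 x (by simpa using hx)) (fun x => haC x) rfl (by omega)
  refine ⟨e.trans (((LinearEquiv.refl k (k × k)).prodCongr f).trans e'.symm), fun x y => ?_⟩
  rw [g1, h1]
  have := hf (e x).2 (e y).2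
  simp only [LinearMap.compl₁₂_apply, Submodule.subtype_apply] at this
  simp [this]

end SympNil

/-- Every partition of `2n` whose odd parts have even multiplicity is the Jordan type of a
skew-adjoint nilpotent endomorphism of a `2n`-dimensional symplectic space (char ≠ 2). -/
theorem stmt4 (k : Type*) [Field k] (hchar : (2 : k) ≠ 0)
    (V : Type*) [AddCommGroup V] [Module k V] [FiniteDimensional k V]
    (n : ℕ) (hdim : Module.finrank k V = 2 * n)
    (B : V →ₗ[k] V →ₗ[k] k)
    (hBnd : ∀ x : V, (∀ y : V, B x y = 0) → x = 0)
    (halt : ∀ x : V, B x x = 0)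
    (lam : Nat.Partition (2 * n))
    (hlam : ∀ j : ℕ, Odd j → Even (Multiset.count j lam.parts)) :
    ∃ N : Module.End k V,
      (∀ x y : V, B (N x) y = - B x (N y)) ∧
      IsNilpotent N ∧
      ∀ t : ℕ, Module.finrank k ↥(LinearMap.ker (N ^ t)) =
        (lam.parts.map fun p => min t p).sum := by
  classical
  obtain ⟨W, _, _, _, C, M, g1, g2, g3, g4, g5⟩ :=
    SympNil.hasModel k lam.parts (fun h => lt_irrefl 0 (lam.parts_pos h))
      (fun j hj => by convert hlam j hj)
  rw [lam.parts_sum] at g5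
  obtain ⟨e, he⟩ := SympNil.exists_isometry k (2 * n) B C hBnd halt g1 g2 hdim g5
  have hpow : ∀ t : ℕ, (e.symm.conj M) ^ t = e.symm.conj (M ^ t) := by
    intro t
    induction t with
    | zero => ext x; simp [LinearEquiv.conj_apply]
    | succ t ih => rw [pow_succ, ih, pow_succ]; ext x; simp [LinearEquiv.conj_apply]
  have hker : ∀ t : ℕ, Module.finrank k ↥(LinearMap.ker ((e.symm.conj M) ^ t)) =
        (lam.parts.map fun p => min t p).sum := by
    intro t
    rw [← g4, hpow]
    have : LinearMap.ker (M ^ t) = (LinearMap.ker (e.symm.conj (M ^ t))).map (e : V →ₗ[k] W) := by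
      ext x
      simp [LinearEquiv.conj_apply, Submodule.mem_map_equiv]
    rw [this]
    exact (LinearEquiv.finrank_map_eq e _).symm
  refine ⟨e.symm.conj M, ?_, ⟨2 * n, ?_⟩, hker⟩
  · intro x y
    rw [← he, ← he]
    simp [LinearEquiv.conj_apply, g3]
  · rw [← LinearMap.ker_eq_top]
    apply Submodule.eq_top_of_finrank_eq
    rw [hker, hdim]
    conv_rhs => rw [← lam.parts_sum]
    conv_rhs => rw [← Multiset.map_id' lam.parts]
    congr 1
    refine Multiset.map_congr rfl fun p hp => ?_
    exact min_eq_right (lam.parts_sum ▸ Multiset.le_sum_of_mem hp)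
end

section
/- Let k be an algebraically closed field with char k ≠ 2, let V be a k-vector space of dimension n with a nondegenerate symmetric bilinear form ⟨·,·⟩, and let λ = (λ₁ ≥ λ₂ ≥ ⋯) be a partition of n in which every even part occurs with even multiplicity. Then there exists a skew-adjoint nilpotent endomorphism N of V with Jordan type λ, i.e., dim ker(N^t) = ∑_j min(t, λ_j) for all t ≥ 0. -/
open LinearMap
universe u
def Model (k : Type u) [Field k] (s : Multiset ℕ) : Prop :=
  ∃ (W : Type u) (_ : AddCommGroup W) (_ : Module k W) (_ : FiniteDimensional k W)
    (B : W →ₗ[k] W →ₗ[k] k) (N : Module.End k W),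
    Module.finrank k W = s.sum ∧ (∀ x, (∀ y, B x y = 0) → x = 0) ∧ (∀ x y, B x y = B y x) ∧
    (∀ x y, B (N x) y = - B x (N y)) ∧
    ∀ t : ℕ, Module.finrank k ↥(LinearMap.ker (N ^ t)) = (s.map fun p => min t p).sum

theorem finrank_ker_prodMap {k W W' : Type*} [Field k] [AddCommGroup W] [Module k W]
    [FiniteDimensional k W] [AddCommGroup W'] [Module k W'] [FiniteDimensional k W']
    (N : Module.End k W) (N' : Module.End k W') (t : ℕ) :
    Module.finrank k (ker ((N.prodMap N' : Module.End k (W × W')) ^ t)) =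
      Module.finrank k (ker (N ^ t)) + Module.finrank k (ker (N' ^ t)) := by
  have h : (N.prodMap N' : Module.End k (W × W')) ^ t = (N ^ t).prodMap (N' ^ t) := by
    induction t with
    | zero => rfl
    | succ t ih => rw [pow_succ, ih, pow_succ, pow_succ]; rfl
  rw [h, LinearMap.ker_prodMap, ← Module.finrank_prod]
  exact LinearEquiv.finrank_eq ((({ toFun := fun x => (⟨x.1.1, x.2.1⟩, ⟨x.1.2, x.2.2⟩), invFun := fun y => ⟨(y.1.1, y.2.1), y.1.2, y.2.2⟩, map_add' := fun _ _ => rfl, map_smul' := fun _ _ => rfl } : (Submodule.prod (ker (N ^ t)) (ker (N' ^ t))) ≃ₗ[k] (ker (N ^ t) × ker (N' ^ t)))))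

def shift (k : Type u) [Field k] (p : ℕ) : Module.End k (Fin p → k) where
  toFun x i := if h : i.1 + 1 < p then x ⟨i.1 + 1, h⟩ else 0
  map_add' x y := by ext i; simp only [Pi.add_apply]; split_ifs <;> simp
  map_smul' c x := by ext i; simp only [Pi.smul_apply]; split_ifs <;> simp

theorem shift_pow (k : Type u) [Field k] (p t : ℕ) (x : Fin p → k) (i : Fin p) :
    (shift k p ^ t) x i = if h : i.1 + t < p then x ⟨i.1 + t, h⟩ else 0 := by
  induction t generalizing x with
  | zero => simp
  | succ t ih =>
    rw [pow_succ, Module.End.mul_apply, ih]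
    by_cases h : i.1 + (t + 1) < p
    · rw [dif_pos h, dif_pos (by omega)]
      change dite _ _ _ = _
      rw [dif_pos (by simp; omega)]; rfl
    · rw [dif_neg h]
      split_ifs with h'
      · change dite _ _ _ = _
        rw [dif_neg (by simp; omega)]
      · rfl

theorem finrank_ker_shift (k : Type u) [Field k] (p t : ℕ) :
    Module.finrank k (ker (shift k p ^ t)) = min t p := by
  have h : ker (shift k p ^ t) = Pi.spanSubset k {i : Fin p | i.1 < t} := by
    ext x
    rw [LinearMap.mem_ker, Pi.mem_spanSubset_iff]
    constructor
    · intro hx i hi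
      replace hi : t ≤ i.1 := not_lt.1 hi
      have := congrFun hx ⟨i.1 - t, by omega⟩
      rw [shift_pow, dif_pos (by simp; omega)] at this
      simpa [Nat.sub_add_cancel hi] using this
    · intro hx
      ext i
      rw [shift_pow]
      split_ifs
      · exact hx _ (by simp)
      · rfl
  rw [h, Pi.dim_spanSubset]
  have h2 : {i : Fin p | i.1 < t} = ((Finset.univ.filter fun i : Fin p => i.1 < t : Finset (Fin p)) : Set (Fin p)) := by
    ext; simp
  rw [h2, Set.ncard_coe_finset, Fin.card_filter_val_lt, min_comm]

def bform (k : Type u) [Field k] (p : ℕ) (e : k) : (Fin p → k) →ₗ[k] (Fin p → k) →ₗ[k] k :=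
  LinearMap.mk₂ k (fun x y => ∑ i : Fin p, e ^ i.1 * (x i * y i.rev))
    (by intros; simp only [← Finset.sum_add_distrib]; congr; ext; simp; ring)
    (by intros; simp only [smul_eq_mul, Finset.mul_sum]; congr; ext; simp; ring)
    (by intros; simp only [← Finset.sum_add_distrib]; congr; ext; simp; ring)
    (by intros; simp only [smul_eq_mul, Finset.mul_sum]; congr; ext; simp; ring)

theorem bform_apply (k : Type u) [Field k] (p : ℕ) (e : k) (x y : Fin p → k) :
    bform k p e x y = ∑ i : Fin p, e ^ i.1 * (x i * y i.rev) := rfl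

theorem bform_nondeg (k : Type u) [Field k] (p : ℕ) (e : k) (he : e ≠ 0) (x : Fin p → k)
    (hx : ∀ y, bform k p e x y = 0) : x = 0 := by
  ext i
  have := hx (Pi.single i.rev 1)
  rw [bform_apply, Finset.sum_eq_single i] at this
  · simpa [he] using this
  · intro j _ hj
    rw [Pi.single_eq_of_ne (by simpa using hj)]; simp
  · simp

theorem bform_shift (k : Type u) [Field k] (p : ℕ) (e : k) (he : e * e = 1) (x y : Fin p → k) :
    bform k p e (shift k p x) y = e * bform k p e x (shift k p y) := by
  cases p with
  | zero => simp [bform_apply]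
  | succ p =>
    rw [bform_apply, bform_apply, Fin.sum_univ_castSucc, Fin.sum_univ_succ]
    simp only [shift, LinearMap.coe_mk, AddHom.coe_mk]
    simp only [mul_add, Finset.mul_sum]
    rw [add_comm]
    congr 1
    · simp
    · apply Finset.sum_congr rfl
      intro i _
      rw [dif_pos (by simp), dif_pos (by rw [Fin.val_rev, Fin.val_succ]; have := i.2; omega)]
      have : (⟨(Fin.succ i).rev.1 + 1, by rw [Fin.val_rev, Fin.val_succ]; have := i.2; omega⟩ : Fin (p+1)) = i.castSucc.rev := by
        ext; simp only [Fin.val_rev, Fin.val_succ, Fin.val_castSucc]; have := i.2; omega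
      rw [this]
      simp only [Fin.val_succ, Fin.val_castSucc, pow_succ]
      have h2 : (⟨i.1 + 1, by omega⟩ : Fin (p+1)) = i.succ := rfl
      rw [h2]
      linear_combination (-(e ^ i.1 * (x i.succ * y i.castSucc.rev))) * he

theorem bform_symm (k : Type u) [Field k] (p : ℕ) (e : k) (he : ∀ i : Fin p, e ^ i.rev.1 = e ^ i.1)
    (x y : Fin p → k) : bform k p e x y = bform k p e y x := by
  rw [bform_apply, bform_apply, ← Equiv.sum_comp Fin.revPerm]
  apply Finset.sum_congr rfl
  intro i _
  rw [Fin.revPerm_apply, he i, Fin.rev_rev, mul_comm (x _)]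

theorem model_odd (k : Type u) [Field k] (p : ℕ) (hp : Odd p) : Model k {p} := by
  refine ⟨Fin p → k, inferInstance, inferInstance, inferInstance, bform k p (-1), shift k p,
    by simp, bform_nondeg k p _ (by simp), bform_symm k p _ ?_, ?_, ?_⟩
  · intro i
    obtain ⟨m, rfl⟩ := hp
    rw [Fin.val_rev]
    have := i.2
    rw [show 2 * m + 1 - (i.1 + 1) = 2 * m - i.1 by omega]
    have h : (-1 : k) ^ (2 * m - i.1) * (-1) ^ i.1 = 1 := by
      rw [← pow_add, Nat.sub_add_cancel (by omega)]; simp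
    rcases neg_one_pow_eq_or k i.1 with h' | h' <;> rw [h'] at h ⊢
    · linear_combination h
    · linear_combination -h
  · intro x y
    rw [bform_shift k p _ (by simp)]; simp
  · simp [finrank_ker_shift]

theorem model_pair (k : Type u) [Field k] (p : ℕ) : Model k {p, p} := by
  have hs := bform_symm k p 1 (by simp)
  refine ⟨(Fin p → k) × (Fin p → k), inferInstance, inferInstance, inferInstance,
    (bform k p 1).compl₁₂ (fst k _ _) (snd k _ _) + (bform k p 1).compl₁₂ (snd k _ _) (fst k _ _),
    (shift k p).prodMap (-shift k p), by simp, ?_, ?_, ?_, ?_⟩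
  · intro x hx
    ext1
    · exact bform_nondeg k p 1 (by simp) _ fun y => by simpa using hx (0, y)
    · exact bform_nondeg k p 1 (by simp) _ fun y => by simpa using hx (y, 0)
  · intro x y
    simp [hs x.1, hs x.2, add_comm]
  · intro x y
    have h := bform_shift k p 1 (by simp)
    simp [h]; ring
  · intro t
    rw [finrank_ker_prodMap, finrank_ker_shift]
    have : ker ((-shift k p) ^ t) = ker (shift k p ^ t) := by
      have h0 : (-shift k p) ^ t = (-1) ^ t * shift k p ^ t := neg_pow (shift k p) t
      rw [h0]
      rcases neg_one_pow_eq_or (Module.End k (Fin p → k)) t with h | h <;> rw [h] <;> ext <;> simp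
    rw [this, finrank_ker_shift]; simp

theorem Model.add {k : Type u} [Field k] {s s' : Multiset ℕ} (h : Model k s) (h' : Model k s') :
    Model k (s + s') := by
  obtain ⟨W, _, _, _, B, N, h1, h2, h3, h4, h5⟩ := h
  obtain ⟨W', _, _, _, B', N', h1', h2', h3', h4', h5'⟩ := h'
  refine ⟨W × W', inferInstance, inferInstance, inferInstance,
    B.compl₁₂ (fst k _ _) (fst k _ _) + B'.compl₁₂ (snd k _ _) (snd k _ _),
    N.prodMap N', by simp [h1, h1'], ?_, ?_, ?_, ?_⟩
  · intro x hx
    ext1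
    · exact h2 _ fun y => by simpa using hx (y, 0)
    · exact h2' _ fun y => by simpa using hx (0, y)
  · intro x y
    simp [h3 x.1, h3' x.2]
  · intro x y
    simp [h4, h4']; ring
  · intro t
    rw [finrank_ker_prodMap, h5, h5']; simp

theorem model_zero (k : Type u) [Field k] : Model k 0 := by
  have h : Module.finrank k PUnit.{u + 1} = 0 := Module.finrank_zero_of_subsingleton
  refine ⟨PUnit, inferInstance, inferInstance, inferInstance, 0, 0, by simpa using h, ?_, ?_, ?_, ?_⟩
  · intros; rfl
  · intros; rfl
  · intros; simp
  · intro t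
    simp only [Multiset.map_zero, Multiset.sum_zero]
    exact Module.finrank_zero_of_subsingleton

theorem model_all (k : Type u) [Field k] (s : Multiset ℕ)
    (hs : ∀ j : ℕ, Even j → Even (Multiset.count j s)) : Model k s := by
  induction hn : s.card using Nat.strong_induction_on generalizing s with
  | _ n ih =>
  subst hn
  rcases Multiset.empty_or_exists_mem s with rfl | ⟨p, hp⟩
  · exact model_zero k
  by_cases hodd : Odd p
  · obtain ⟨s', rfl⟩ := Multiset.exists_cons_of_mem hp
    rw [← Multiset.singleton_add]
    refine (model_odd k p hodd).add (ih _ (by simp) s' ?_ rfl)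
    intro j hj
    have := hs j hj
    rwa [Multiset.count_cons_of_ne] at this
    rintro rfl
    exact (Nat.not_even_iff_odd.2 hodd) hj
  · have he := hs p (Nat.not_odd_iff_even.1 hodd)
    have h1 := Multiset.count_pos.2 hp
    have h2 : ({p, p} : Multiset ℕ) ≤ s := by
      rw [show ({p, p} : Multiset ℕ) = Multiset.replicate 2 p from rfl, ← Multiset.le_count_iff_replicate_le]
      obtain ⟨m, hm⟩ := he
      omega
    obtain ⟨s', rfl⟩ := Multiset.le_iff_exists_add.1 h2
    refine (model_pair k p).add (ih _ (by simp) s' ?_ rfl)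
    intro j hj
    have := hs j hj
    rw [Multiset.count_add, Nat.even_add] at this
    refine this.1 ?_
    by_cases hjp : j = p
    · subst hjp; simp
    · simp [hjp]

theorem exists_equiv {k : Type*} [Field k] [IsAlgClosed k] (hchar : (2 : k) ≠ 0)
    {V : Type*} [AddCommGroup V] [Module k V] [FiniteDimensional k V] (n : ℕ)
    (hdim : Module.finrank k V = n)
    (B : V →ₗ[k] V →ₗ[k] k)
    (hBnd : ∀ x : V, (∀ y : V, B x y = 0) → x = 0)
    (hsymm : ∀ x y : V, B x y = B y x) :
    (LinearMap.BilinMap.toQuadraticMap B).Equivalent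
      (QuadraticMap.weightedSumSquares k (1 : Fin n → k)) := by
  subst hdim
  let _ : Invertible (2 : k) := invertibleOfNonzero hchar
  apply QuadraticForm.equivalent_weightedSumSquares_of_isAlgClosed
  have : QuadraticMap.associated (R := k) (LinearMap.BilinMap.toQuadraticMap B) = B :=
    QuadraticMap.associated_left_inverse k hsymm
  rw [this]
  exact hBnd

/-- Every partition of `n` whose even parts have even multiplicity is the Jordan type of a
skew-adjoint nilpotent endomorphism of an `n`-dimensional quadratic space over an
algebraically closed field of characteristic ≠ 2. -/
theorem stmt5 (k : Type*) [Field k] [IsAlgClosed k] (hchar : (2 : k) ≠ 0)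
    (V : Type*) [AddCommGroup V] [Module k V] [FiniteDimensional k V]
    (n : ℕ) (hdim : Module.finrank k V = n)
    (B : V →ₗ[k] V →ₗ[k] k)
    (hBnd : ∀ x : V, (∀ y : V, B x y = 0) → x = 0)
    (hsymm : ∀ x y : V, B x y = B y x)
    (lam : Nat.Partition n)
    (hlam : ∀ j : ℕ, Even j → Even (Multiset.count j lam.parts)) :
    ∃ N : Module.End k V,
      (∀ x y : V, B (N x) y = - B x (N y)) ∧
      IsNilpotent N ∧
      ∀ t : ℕ, Module.finrank k ↥(LinearMap.ker (N ^ t)) =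
        (lam.parts.map fun p => min t p).sum := by
  obtain ⟨W, _, _, _, C, N, h1, h2, h3, h4, h5⟩ := model_all k lam.parts hlam
  rw [lam.parts_sum] at h1
  obtain ⟨e⟩ := (exists_equiv hchar n hdim B hBnd hsymm).trans
    (exists_equiv hchar n h1 C h2 h3).symm
  have hq : ∀ x, C (e x) (e x) = B x x := fun x => e.map_app x
  have hB : ∀ x y, C (e x) (e y) = B x y := by
    intro x y
    have h := hq (x + y)
    have ha : e (x + y) = e x + e y := map_add e.toLinearEquiv x y
    rw [ha] at h
    simp only [map_add, LinearMap.add_apply, hq, h3 (e y) (e x), hsymm y x] at h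
    refine mul_left_cancel₀ hchar ?_
    linear_combination h
  let f : V ≃ₗ[k] W := e.toLinearEquiv
  have hf : ∀ x y, C (f x) (f y) = B x y := hB
  have hpow : ∀ t, (f.symm.conj N) ^ t = f.symm.conj (N ^ t) := by
    intro t
    exact (map_pow f.symm.conjRingEquiv N t).symm
  have hker : ∀ t : ℕ, Module.finrank k ↥(LinearMap.ker ((f.symm.conj N) ^ t)) =
        (lam.parts.map fun p => min t p).sum := by
    intro t
    rw [← h5 t, hpow]
    have : ker (f.symm.conj (N ^ t)) = (ker (N ^ t)).comap f.toLinearMap := by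
      ext x; simp [LinearEquiv.conj_apply]
    rw [this]
    exact (f.ofSubmodule' _).finrank_eq
  refine ⟨f.symm.conj N, ?_, ⟨n, ?_⟩, hker⟩
  · intro x y
    rw [← hf, ← hf]
    simp [LinearEquiv.conj_apply, h4]
  · rw [← LinearMap.ker_eq_top]
    apply Submodule.eq_top_of_finrank_eq
    rw [hker, hdim]
    conv_rhs => rw [← lam.parts_sum]
    congr 1
    conv_rhs => rw [← Multiset.map_id lam.parts]
    apply Multiset.map_congr rfl
    intro p hp
    exact min_eq_right (lam.le_of_mem_parts hp)
end

section
/- Let k be an algebraically closed field with char k ≠ 2 and let V be a finite-dimensional k-vector space with a nondegenerate alternating bilinear form ⟨·,·⟩. If N and N' are skew-adjoint nilpotent endomorphisms of V with the same Jordan type, i.e., dim ker(N^t) = dim ker(N'^t) for all t ≥ 0, then there exists a linear automorphism g of V with ⟨g x, g y⟩ = ⟨x, y⟩ for all x, y ∈ V and g ∘ N ∘ g^{−1} = N'. -/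
open Polynomial in
/-- An injective endomorphism over an algebraically closed field of characteristic ≠ 2 has a
square root which is a polynomial in it. -/
theorem aux_sqrt {k : Type*} [Field k] [IsAlgClosed k] (hchar : (2 : k) ≠ 0)
    {V : Type*} [AddCommGroup V] [Module k V] [FiniteDimensional k V]
    (S : Module.End k V) (hS : Function.Injective S) :
    ∃ q : k[X], aeval S q * aeval S q = S := by
  classical
  set m := minpoly k S with hm
  have hm0 : m ≠ 0 := minpoly.ne_zero (Algebra.IsIntegral.isIntegral S)
  have hcop : IsCoprime (X : k[X]) m := by
    rw [irreducible_X.coprime_iff_not_dvd]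
    intro h
    have hr : m.IsRoot 0 := by
      rw [← dvd_iff_isRoot]; simpa using h
    have h1 := Module.End.hasEigenvalue_of_isRoot hr
    obtain ⟨v, hv⟩ := h1.exists_hasEigenvector
    have h2 := hv.apply_eq_smul
    rw [zero_smul] at h2
    exact hv.2 (hS (by rw [h2, map_zero]))
  choose s hs using fun a : k => IsAlgClosed.exists_pow_nat_eq a (n := 2) (by norm_num)
  set p := Lagrange.interpolate m.roots.toFinset id s with hp
  have hpr : ∀ a ∈ m.roots, X - C a ∣ p ^ 2 - X := by
    intro a ha
    rw [dvd_iff_isRoot]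
    have := Lagrange.eval_interpolate_at_node (s := m.roots.toFinset) (v := id) s
      (Function.injective_id.injOn) (Multiset.mem_toFinset.2 ha)
    simp only [id] at this
    simp only [IsRoot.def, eval_sub, eval_pow, eval_X]
    rw [hp]
    erw [this]
    rw [hs, sub_self]
  have hdvd : m ∣ (p ^ 2 - X) ^ (Multiset.card m.roots) := by
    have h1 := (IsAlgClosed.splits m).eq_prod_roots
    have h2 := Multiset.prod_dvd_prod_of_dvd (S := m.roots) (fun a => X - C a)
      (fun _ => p ^ 2 - X) hpr
    rw [Multiset.map_const', Multiset.prod_replicate] at h2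
    refine dvd_trans ?_ h2
    conv_lhs => rw [h1]
    rw [(isUnit_C.2 (isUnit_iff_ne_zero.2 (leadingCoeff_ne_zero.2 hm0))).mul_left_dvd]
  set x := AdjoinRoot.mk m p with hx
  set u := AdjoinRoot.root m with hu
  have hnil : IsNilpotent (x ^ 2 - u) := by
    refine ⟨Multiset.card m.roots, ?_⟩
    have := AdjoinRoot.mk_eq_zero.2 hdvd
    rw [map_pow, map_sub, map_pow, AdjoinRoot.mk_X] at this
    exact this
  have hunit : IsUnit u := by
    obtain ⟨a, b, hab⟩ := hcop
    have := congrArg (AdjoinRoot.mk m) hab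
    simp only [map_add, map_mul, AdjoinRoot.mk_self, AdjoinRoot.mk_X, mul_zero, add_zero,
      map_one] at this
    exact IsUnit.of_mul_eq_one_right _ this
  have hxu : IsUnit x := by
    have : IsUnit (x ^ 2) := by
      have := IsNilpotent.isUnit_add_right_of_commute hnil hunit (Commute.all _ _)
      simpa using this
    exact (isUnit_pow_iff (by norm_num)).1 this
  obtain ⟨r, ⟨-, hr⟩, -⟩ := existsUnique_nilpotent_sub_and_aeval_eq_zero
    (P := (X ^ 2 - C u : (AdjoinRoot m)[X])) (x := x) (by simpa using hnil) (by
      have h2 : IsUnit (2 : AdjoinRoot m) := by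
        have := (isUnit_iff_ne_zero.2 hchar).map (algebraMap k (AdjoinRoot m))
        rwa [map_ofNat] at this
      simpa [one_add_one_eq_two] using h2.mul hxu)
  obtain ⟨q, rfl⟩ := AdjoinRoot.mk_surjective r
  refine ⟨q, ?_⟩
  have h3 : AdjoinRoot.mk m (q ^ 2 - X) = 0 := by
    rw [map_sub, map_pow, AdjoinRoot.mk_X]; simpa using hr
  have h4 : aeval S (q ^ 2 - X) = 0 := by
    obtain ⟨c, hc⟩ := AdjoinRoot.mk_eq_zero.1 h3
    rw [hc, map_mul, hm, minpoly.aeval, zero_mul]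
  rw [map_sub, aeval_X, map_pow, sub_eq_zero, pow_two] at h4
  exact h4

/-- A linear map injective on a subspace agrees there with a linear equivalence. -/
theorem aux_ext {k : Type*} [Field k] {Q Q' : Type*} [AddCommGroup Q] [Module k Q]
    [FiniteDimensional k Q] [AddCommGroup Q'] [Module k Q'] [FiniteDimensional k Q']
    (hd : Module.finrank k Q = Module.finrank k Q') (f : Q →ₗ[k] Q') (P : Submodule k Q)
    (hf : ∀ x ∈ P, f x = 0 → x = 0) : ∃ e : Q ≃ₗ[k] Q', ∀ x ∈ P, e x = f x := by
  obtain ⟨D, hD⟩ := P.exists_isCompl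
  have hinj : Function.Injective (f.domRestrict P) := by
    rw [← LinearMap.ker_eq_bot, LinearMap.ker_eq_bot']
    intro x hx
    exact Subtype.ext (hf x x.2 hx)
  let eP := LinearEquiv.ofInjective (f.domRestrict P) hinj
  obtain ⟨D', hD'⟩ := (LinearMap.range (f.domRestrict P)).exists_isCompl
  have h1 := Submodule.finrank_add_eq_of_isCompl hD
  have h2 := Submodule.finrank_add_eq_of_isCompl hD'
  have h3 := eP.finrank_eq
  let eD : D ≃ₗ[k] D' := LinearEquiv.ofFinrankEq _ _ (by omega)
  refine ⟨(Submodule.prodEquivOfIsCompl P D hD).symm ≪≫ₗ (eP.prodCongr eD) ≪≫ₗ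
    Submodule.prodEquivOfIsCompl _ D' hD', ?_⟩
  intro x hx
  have := Submodule.prodEquivOfIsCompl_symm_apply_left P D hD ⟨x, hx⟩
  simp only at this
  simp [this, eP]

/-- Gluing: a linear map on `Q` vanishing on `P ⊓ Q` extends to a map vanishing on `P`. -/
theorem aux_glue {k : Type*} [Field k] {V K : Type*} [AddCommGroup V] [Module k V]
    [AddCommGroup K] [Module k K] (P Q : Submodule k V) (w : Q →ₗ[k] K)
    (hw : ∀ x : Q, (x : V) ∈ P → w x = 0) :
    ∃ φ : V →ₗ[k] K, (∀ x ∈ P, φ x = 0) ∧ ∀ x : Q, φ x = w x := by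
  let a : V →ₗ.[k] K := ⟨P, 0⟩
  let b : V →ₗ.[k] K := ⟨Q, w⟩
  have H : ∀ (x : a.domain) (y : b.domain), (x : V) = y → a x = b y := by
    intro x y hxy
    have : w y = 0 := hw y (hxy ▸ x.2)
    exact this.symm
  obtain ⟨φ, hφ⟩ := LinearMap.exists_extend (a.sup b H).toFun
  have key : ∀ z : (a.sup b H).domain, φ z = (a.sup b H) z := fun z => by
    have := LinearMap.congr_fun hφ z
    exact this
  refine ⟨φ, ?_, ?_⟩
  · intro x hx
    have h1 := (a.left_le_sup b H)
    have := h1.2 (x := ⟨x, hx⟩) (y := ⟨x, h1.1 hx⟩) rfl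
    have h2 := key ⟨x, h1.1 hx⟩
    rw [← this] at h2
    exact h2
  · intro x
    have h1 := (a.right_le_sup b H)
    have := h1.2 (x := x) (y := ⟨x, h1.1 x.2⟩) rfl
    have h2 := key ⟨x, h1.1 x.2⟩
    rw [← this] at h2
    exact h2

/-- The restriction of an endomorphism to its range. -/
def auxRes {k : Type*} [Field k] {V : Type*} [AddCommGroup V] [Module k V]
    (N : Module.End k V) : Module.End k (LinearMap.range N) :=
  N.rangeRestrict ∘ₗ (LinearMap.range N).subtype

theorem auxRes_pow {k : Type*} [Field k] {V : Type*} [AddCommGroup V] [Module k V]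
    (N : Module.End k V) (t : ℕ) (x : LinearMap.range N) :
    (((auxRes N) ^ t) x : V) = (N ^ t) (x : V) := by
  induction t with
  | zero => simp
  | succ t ih =>
    rw [pow_succ', pow_succ', Module.End.mul_apply, Module.End.mul_apply, ← ih]
    rfl

theorem auxRes_range {k : Type*} [Field k] {V : Type*} [AddCommGroup V] [Module k V]
    (N : Module.End k V) (t : ℕ) :
    Module.finrank k (LinearMap.range ((auxRes N) ^ t)) =
      Module.finrank k (LinearMap.range (N ^ (t + 1))) := by
  rw [← Submodule.finrank_map_subtype_eq]
  suffices hs : Submodule.map (LinearMap.range N).subtype (LinearMap.range (auxRes N ^ t)) =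
      LinearMap.range (N ^ (t + 1)) by rw [hs]
  rw [← LinearMap.range_comp]
  have h : (LinearMap.range N).subtype ∘ₗ ((auxRes N) ^ t) =
    (N ^ t) ∘ₗ (LinearMap.range N).subtype := by
    ext x; exact auxRes_pow N t x
  rw [h, LinearMap.range_comp, Submodule.range_subtype, ← LinearMap.range_comp, pow_succ]
  rfl

/-- Nilpotent endomorphisms with the same ranks of powers are similar. -/
theorem aux_similar {k : Type*} [Field k] (n : ℕ) : ∀ {V V' : Type*}
    [AddCommGroup V] [Module k V] [FiniteDimensional k V]
    [AddCommGroup V'] [Module k V'] [FiniteDimensional k V']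
    (N : Module.End k V) (N' : Module.End k V') (_ : N ^ n = 0) (_ : N' ^ n = 0)
    (_ : ∀ t : ℕ, Module.finrank k (LinearMap.range (N ^ t)) =
      Module.finrank k (LinearMap.range (N' ^ t))),
    ∃ g : V ≃ₗ[k] V', ∀ x, g (N x) = N' (g x) := by
  induction n with
  | zero =>
    intro V V' _ _ _ _ _ _ N N' h h' hr
    have hd := hr 0
    rw [pow_zero, pow_zero, Module.End.one_eq_id, Module.End.one_eq_id, LinearMap.range_id,
      LinearMap.range_id, finrank_top, finrank_top] at hd
    refine ⟨LinearEquiv.ofFinrankEq _ _ hd, fun x => ?_⟩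
    have hz : ∀ y : V', y = 0 := fun y => by
      have := LinearMap.congr_fun h' y
      simpa using this
    rw [hz (N' _)]; exact hz _
  | succ n ih =>
    intro V V' _ _ _ _ _ _ N N' h h' hr
    have hd := hr 0
    rw [pow_zero, pow_zero, Module.End.one_eq_id, Module.End.one_eq_id, LinearMap.range_id,
      LinearMap.range_id, finrank_top, finrank_top] at hd
    have hR := hr 1
    rw [pow_one, pow_one] at hR
    have hker : Module.finrank k (LinearMap.ker N) = Module.finrank k (LinearMap.ker N') := by
      have h1 := LinearMap.finrank_range_add_finrank_ker N
      have h2 := LinearMap.finrank_range_add_finrank_ker N'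
      omega
    have hres : ∀ {W : Type _} [AddCommGroup W] [Module k W] (M : Module.End k W),
        M ^ (n + 1) = 0 → (auxRes M) ^ n = 0 := by
      intro W _ _ M hM
      ext ⟨x, y, rfl⟩
      rw [auxRes_pow]
      have := LinearMap.congr_fun hM y
      rw [pow_succ] at this
      exact this
    have hres' : ∀ {W : Type _} [AddCommGroup W] [Module k W] (M : Module.End k W),
        M ^ (n + 1) = 0 → (auxRes M) ^ n = 0 := by
      intro W _ _ M hM
      ext ⟨x, y, rfl⟩
      rw [auxRes_pow]
      have := LinearMap.congr_fun hM y
      rw [pow_succ] at this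
      exact this
    obtain ⟨g0, hg0⟩ := ih (auxRes N) (auxRes N') (hres N h) (hres' N' h') (fun t => by
      rw [auxRes_range, auxRes_range, hr])
    obtain ⟨f, hf⟩ := Module.projective_lifting_property N'.rangeRestrict
      (g0.toLinearMap ∘ₗ N.rangeRestrict) N'.surjective_rangeRestrict
    have hf' : ∀ x, N' (f x) = (g0 (N.rangeRestrict x) : V') := fun x =>
      congrArg Subtype.val (LinearMap.congr_fun hf x)
    have hg0' : ∀ y : LinearMap.range N, N' (g0 y : V') = g0 (N.rangeRestrict (y : V)) := fun y =>
      (congrArg Subtype.val (hg0 y)).symm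
    let φ₀ : LinearMap.range N →ₗ[k] LinearMap.ker N' :=
      LinearMap.codRestrict (LinearMap.ker N')
        ((LinearMap.range N').subtype ∘ₗ g0.toLinearMap - f ∘ₗ (LinearMap.range N).subtype)
        (by
          intro y
          rw [LinearMap.mem_ker]
          simp only [LinearMap.sub_apply, LinearMap.comp_apply, Submodule.subtype_apply,
            LinearEquiv.coe_coe, map_sub]
          rw [hf', hg0', sub_self])
    obtain ⟨φ₁, hφ₁⟩ := LinearMap.exists_extend φ₀
    let f1 : V →ₗ[k] V' := f + (LinearMap.ker N').subtype ∘ₗ φ₁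
    have hf1 : ∀ x, N' (f1 x) = (g0 (N.rangeRestrict x) : V') := fun x => by
      have : N' (φ₁ x : V') = 0 := (φ₁ x).2
      simp [f1, this, hf']
    have hf1r : ∀ y : LinearMap.range N, f1 y = (g0 y : V') := fun y => by
      have h1 : φ₁ (y : V) = φ₀ y := LinearMap.congr_fun hφ₁ y
      simp [f1, h1, φ₀]
    have hk : ∀ x : LinearMap.ker N, N.rangeRestrict (x : V) = 0 := fun x =>
      Subtype.ext x.2
    let fk : LinearMap.ker N →ₗ[k] LinearMap.ker N' :=
      LinearMap.codRestrict (LinearMap.ker N') (f1 ∘ₗ (LinearMap.ker N).subtype) (by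
        intro x
        rw [LinearMap.mem_ker]
        simp only [LinearMap.comp_apply, Submodule.subtype_apply]
        rw [hf1, hk, map_zero]; rfl)
    obtain ⟨ψ, hψ⟩ := aux_ext hker fk ((LinearMap.range N).comap (LinearMap.ker N).subtype) (by
      intro x hx hx0
      have h1 : f1 (x : V) = 0 := congrArg Subtype.val hx0
      have h2 := hf1r ⟨x, hx⟩
      simp only [h1] at h2
      have h3 : g0 ⟨x, hx⟩ = 0 := Subtype.ext h2.symm
      have h4 := (LinearEquiv.map_eq_zero_iff g0).1 h3
      have h5 : (x : V) = 0 := congrArg Subtype.val h4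
      exact Subtype.ext h5)
    obtain ⟨φ₂, hφP, hφQ⟩ := aux_glue (LinearMap.range N) (LinearMap.ker N)
      (ψ.toLinearMap - fk) (by
        intro x hx
        simp only [LinearMap.sub_apply, LinearEquiv.coe_coe]
        rw [hψ x hx, sub_self])
    let g : V →ₗ[k] V' := f1 + (LinearMap.ker N').subtype ∘ₗ φ₂
    have hgN : ∀ x, N' (g x) = (g0 (N.rangeRestrict x) : V') := fun x => by
      have : N' (φ₂ x : V') = 0 := (φ₂ x).2
      simp [g, this, hf1]
    have hgr : ∀ y : LinearMap.range N, g y = (g0 y : V') := fun y => by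
      simp [g, hφP y y.2, hf1r]
    have hginj : Function.Injective g := by
      rw [← LinearMap.ker_eq_bot, LinearMap.ker_eq_bot']
      intro x hx
      have h1 := hgN x
      rw [hx, map_zero] at h1
      have h2 : g0 (N.rangeRestrict x) = 0 := Subtype.ext h1.symm
      have h3 := (LinearEquiv.map_eq_zero_iff g0).1 h2
      have h4 : N x = 0 := congrArg Subtype.val h3
      have h5 : g x = (ψ ⟨x, h4⟩ : V') := by
        have := hφQ ⟨x, h4⟩
        simp only at this
        simp [g, this, fk]
      rw [hx] at h5
      have h6 : ψ ⟨x, h4⟩ = 0 := Subtype.ext h5.symm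
      exact congrArg Subtype.val ((LinearEquiv.map_eq_zero_iff ψ).1 h6)
    refine ⟨LinearMap.linearEquivOfInjective g hginj hd, fun x => ?_⟩
    simp only [LinearMap.linearEquivOfInjective_apply]
    rw [hgN]
    exact hgr (N.rangeRestrict x)

/-- Two skew-adjoint nilpotent endomorphisms of a symplectic space over an algebraically
closed field of characteristic ≠ 2 with the same Jordan type are conjugate by an element
of the symplectic group. -/
theorem stmt6 (k : Type*) [Field k] [IsAlgClosed k] (hchar : (2 : k) ≠ 0)
    (V : Type*) [AddCommGroup V] [Module k V] [FiniteDimensional k V]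
    (B : V →ₗ[k] V →ₗ[k] k)
    (hBnd : ∀ x : V, (∀ y : V, B x y = 0) → x = 0)
    (halt : ∀ x : V, B x x = 0)
    (N N' : Module.End k V)
    (hskew : ∀ x y : V, B (N x) y = - B x (N y))
    (hskew' : ∀ x y : V, B (N' x) y = - B x (N' y))
    (hnil : IsNilpotent N) (hnil' : IsNilpotent N')
    (hjt : ∀ t : ℕ, Module.finrank k ↥(LinearMap.ker (N ^ t)) =
      Module.finrank k ↥(LinearMap.ker (N' ^ t))) :
    ∃ g : V ≃ₗ[k] V,
      (∀ x y : V, B (g x) (g y) = B x y) ∧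
      (∀ w : V, g (N (g.symm w)) = N' w) := by
  obtain ⟨a, ha⟩ := hnil
  obtain ⟨b, hb⟩ := hnil'
  obtain ⟨g, hg⟩ := aux_similar (k := k) (a + b) N N' (by rw [pow_add, ha, zero_mul])
    (by rw [pow_add, hb, mul_zero]) (fun t => by
      have h1 := LinearMap.finrank_range_add_finrank_ker (N ^ t)
      have h2 := LinearMap.finrank_range_add_finrank_ker (N' ^ t)
      have := hjt t
      omega)
  have hanti : ∀ x y, B x y = - B y x := fun x y => by
    have h := halt (x + y)
    simp only [map_add, LinearMap.add_apply, halt] at h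
    linear_combination h
  have hBinj : Function.Injective B := by
    rw [← LinearMap.ker_eq_bot, LinearMap.ker_eq_bot']
    intro x hx
    exact hBnd x (fun y => by rw [hx]; rfl)
  let e : V ≃ₗ[k] Module.Dual k V :=
    LinearMap.linearEquivOfInjective B hBinj Subspace.dual_finrank_eq.symm
  have he : ∀ x, e x = B x := fun x => rfl
  let S : Module.End k V := e.symm.toLinearMap ∘ₗ (B.compl₁₂ g.toLinearMap g.toLinearMap)
  have hS : ∀ x y, B (S x) y = B (g x) (g y) := fun x y => by
    rw [← he]
    simp [S]
  have hext : ∀ x y, (∀ z, B x z = B y z) → x = y := fun x y h =>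
    hBinj (LinearMap.ext h)
  have hSinj : Function.Injective S := by
    rw [← LinearMap.ker_eq_bot, LinearMap.ker_eq_bot']
    intro x hx
    have : g x = 0 := hBnd _ (fun y => by
      have := hS x (g.symm y)
      rw [hx] at this
      simpa using this.symm)
    simpa using this
  have hSN : Commute N S := by
    refine LinearMap.ext fun x => hext _ _ fun z => ?_
    rw [Module.End.mul_apply, Module.End.mul_apply, hskew, hS, hS, hg, hg, hskew']
  have hSad : ∀ x y, B (S x) y = B x (S y) := fun x y => by
    rw [hS, hanti x, hS, hanti]
  obtain ⟨q, hq⟩ := aux_sqrt hchar S hSinj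
  have had : ∀ (p : Polynomial k) (x y : V),
      B (Polynomial.aeval S p x) y = B x (Polynomial.aeval S p y) := by
    intro p
    induction p using Polynomial.induction_on' with
    | add p₁ p₂ h₁ h₂ => intro x y; simp [h₁, h₂]
    | monomial n c =>
      intro x y
      have hp : ∀ (n : ℕ) (x y : V), B ((S ^ n) x) y = B x ((S ^ n) y) := by
        intro n
        induction n with
        | zero => intro x y; simp
        | succ n ih =>
          intro x y
          rw [pow_succ, Module.End.mul_apply, ih, hSad, ← Module.End.mul_apply, ← pow_succ',
            ← pow_succ]
      simp [Polynomial.aeval_monomial, hp]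
  set R : Module.End k V := Polynomial.aeval S q with hR
  have hRN : ∀ x, R (N x) = N (R x) := fun x => by
    have h : Commute N R := by
      have hmem : R ∈ Algebra.adjoin k {S} := Polynomial.aeval_mem_adjoin_singleton k S
      exact Algebra.commute_of_mem_adjoin_of_forall_mem_commute hmem (by
        rintro _ rfl; exact hSN)
    exact (LinearMap.congr_fun h x).symm
  have hRB : ∀ x y, B (R x) (R y) = B (g x) (g y) := fun x y => by
    rw [← had, ← Module.End.mul_apply, hq, hS]
  have hRinj : Function.Injective R := by
    intro x y hxy
    apply hSinj
    rw [← hq, Module.End.mul_apply, Module.End.mul_apply, hxy]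
  let Re : V ≃ₗ[k] V := LinearEquiv.ofInjectiveEndo R hRinj
  have hRe : ∀ x, R (Re.symm x) = x := fun x => Re.apply_symm_apply x
  refine ⟨Re.symm ≪≫ₗ g, ?_, ?_⟩
  · intro x y
    simp only [LinearEquiv.trans_apply]
    rw [← hRB, hRe, hRe]
  · intro w
    simp only [LinearEquiv.trans_apply, LinearEquiv.symm_trans_apply, LinearEquiv.symm_symm]
    have h1 : Re (g.symm w) = R (g.symm w) := rfl
    have h2 : N (R (g.symm w)) = Re (N (g.symm w)) := (hRN _).symm
    rw [h1, h2, Re.symm_apply_apply, hg, g.apply_symm_apply]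
end

section
/- Let k be an algebraically closed field with char k ≠ 2 and let V be a finite-dimensional k-vector space with a nondegenerate symmetric bilinear form ⟨·,·⟩. If N and N' are skew-adjoint nilpotent endomorphisms of V with the same Jordan type, i.e., dim ker(N^t) = dim ker(N'^t) for all t ≥ 0, then there exists a linear automorphism g of V with ⟨g x, g y⟩ = ⟨x, y⟩ for all x, y ∈ V and g ∘ N ∘ g^{−1} = N'. -/
theorem aux_dim {k V : Type*} [Field k] [AddCommGroup V] [Module k V] [FiniteDimensional k V]
    (N : Module.End k V) (M : Module.End k (LinearMap.range N))
    (hM : ∀ x, (M x : V) = N x) (t : ℕ) :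
    Module.finrank k (LinearMap.ker (M ^ t)) + Module.finrank k (LinearMap.ker N) =
      Module.finrank k (LinearMap.ker (N ^ (t+1))) := by
  have hMt : ∀ t : ℕ, ∀ x, ((M ^ t) x : V) = (N ^ t) x := by
    intro t
    induction t with
    | zero => simp
    | succ t ih => intro x; rw [pow_succ', pow_succ', Module.End.mul_apply, Module.End.mul_apply, hM, ih]
  let F := N.rangeRestrict.domRestrict (LinearMap.ker (N ^ (t+1)))
  have h := F.finrank_range_add_finrank_ker
  have hr : LinearMap.range F = LinearMap.ker (M ^ t) := by
    ext x
    constructor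
    · rintro ⟨y, rfl⟩
      rw [LinearMap.mem_ker]
      apply Subtype.ext
      rw [hMt]
      have h3 : ∀ z : V, (N ^ (t+1)) z = 0 → (N ^ t) (N z) = 0 := by
        intro z hz
        rwa [pow_succ, Module.End.mul_apply] at hz
      exact h3 _ y.2
    · intro hx
      obtain ⟨y, hy⟩ := x.2
      have h2 : (N ^ t) (x : V) = 0 := by rw [← hMt, LinearMap.mem_ker.1 hx]; rfl
      refine ⟨⟨y, ?_⟩, ?_⟩
      · rw [LinearMap.mem_ker, pow_succ, Module.End.mul_apply, hy, h2]
      · apply Subtype.ext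
        simpa [F] using hy
  have hk : Module.finrank k (LinearMap.ker F) = Module.finrank k (LinearMap.ker N) := by
    have : LinearMap.ker F = (LinearMap.ker N).comap (LinearMap.ker (N ^ (t+1))).subtype := by
      ext x
      simp [F, Subtype.ext_iff]
    rw [this]
    apply LinearEquiv.finrank_eq
    apply Submodule.comapSubtypeEquivOfLe
    intro x hx
    rw [LinearMap.mem_ker, pow_succ, Module.End.mul_apply, LinearMap.mem_ker.1 hx, map_zero]
  rw [hr, hk] at h
  exact h

/-- complement of `ker ∩ range` in `ker`. -/
theorem aux_compl {k V : Type*} [Field k] [AddCommGroup V] [Module k V] [FiniteDimensional k V]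
    (K W : Submodule k V) : ∃ K1 : Submodule k V, K1 ≤ K ∧ Disjoint K1 W ∧ K1 ⊔ (K ⊓ W) = K ∧
      Module.finrank k K1 + Module.finrank k (K ⊓ W : Submodule k V) = Module.finrank k K := by
  obtain ⟨C, hC⟩ := exists_isCompl (K ⊓ W)
  have h1 : (K ⊓ C) ⊔ (K ⊓ W) = K := by
    apply le_antisymm (sup_le inf_le_left inf_le_left)
    intro x hx
    have : x ∈ (K ⊓ W) ⊔ C := by rw [hC.sup_eq_top]; trivial
    obtain ⟨a, ha, b, hb, rfl⟩ := Submodule.mem_sup.1 this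
    refine Submodule.mem_sup.2 ⟨b, ⟨?_, hb⟩, a, ha, add_comm _ _⟩
    simpa using K.sub_mem hx ha.1
  have h2 : Disjoint (K ⊓ C) W := by
    rw [Submodule.disjoint_def]
    intro x hx hw
    exact Submodule.disjoint_def.1 hC.disjoint x ⟨hx.1, hw⟩ hx.2
  refine ⟨K ⊓ C, inf_le_left, h2, h1, ?_⟩
  have := Submodule.finrank_sup_add_finrank_inf_eq (K ⊓ C) (K ⊓ W)
  rw [h1, (h2.mono_right inf_le_right).eq_bot] at this
  simpa using this.symm

theorem aux_sim {k : Type*} [Field k] (n : ℕ) : ∀ {V V' : Type _} [AddCommGroup V] [Module k V]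
    [FiniteDimensional k V] [AddCommGroup V'] [Module k V'] [FiniteDimensional k V']
    (N : Module.End k V) (N' : Module.End k V') (_ : N ^ n = 0) (_ : N' ^ n = 0)
    (_ : ∀ t : ℕ, Module.finrank k (LinearMap.ker (N ^ t)) =
      Module.finrank k (LinearMap.ker (N' ^ t))),
    ∃ g : V ≃ₗ[k] V', ∀ x, g (N x) = N' (g x) := by
  induction n with
  | zero =>
    intro V V' _ _ _ _ _ _ N N' h h' _
    have s : ∀ x : V, x = 0 := fun x => by simpa using LinearMap.congr_fun h x
    have s' : ∀ x : V', x = 0 := fun x => by simpa using LinearMap.congr_fun h' x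
    exact ⟨⟨0, 0, fun x => by rw [s x]; simp, fun x => by rw [s' x]; simp⟩,
      fun x => by rw [s' (N' _)]; exact s' _⟩
  | succ n ih =>
    intro V V' _ _ _ _ _ _ N N' hN hN' hjt
    let M : Module.End k (LinearMap.range N) :=
      N.restrict (p := LinearMap.range N) (q := LinearMap.range N) (fun x _ => ⟨x, rfl⟩)
    let M' : Module.End k (LinearMap.range N') :=
      N'.restrict (p := LinearMap.range N') (q := LinearMap.range N') (fun x _ => ⟨x, rfl⟩)
    have hM : ∀ x, (M x : V) = N x := fun x => rfl
    have hM' : ∀ x, (M' x : V') = N' x := fun x => rfl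
    have d := aux_dim N M hM
    have d' := aux_dim N' M' hM'
    have hK : Module.finrank k (LinearMap.ker N) = Module.finrank k (LinearMap.ker N') := by
      have := hjt 1
      rwa [pow_one, pow_one] at this
    have hV : Module.finrank k V = Module.finrank k V' := by
      have := hjt (n+1)
      rw [hN, hN', LinearMap.ker_zero, LinearMap.ker_zero, finrank_top, finrank_top] at this
      exact this
    have hMn : M ^ n = 0 := by
      have := d n
      rw [hN, LinearMap.ker_zero, finrank_top] at this
      have h2 := N.finrank_range_add_finrank_ker
      have h3 : LinearMap.ker (M ^ n) = ⊤ := Submodule.eq_top_of_finrank_eq (by omega)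
      exact LinearMap.ker_eq_top.1 h3
    have hMn' : M' ^ n = 0 := by
      have := d' n
      rw [hN', LinearMap.ker_zero, finrank_top] at this
      have h2 := N'.finrank_range_add_finrank_ker
      have h3 : LinearMap.ker (M' ^ n) = ⊤ := Submodule.eq_top_of_finrank_eq (by omega)
      exact LinearMap.ker_eq_top.1 h3
    have hjM : ∀ t, Module.finrank k (LinearMap.ker (M ^ t)) =
        Module.finrank k (LinearMap.ker (M' ^ t)) := by
      intro t
      have := d t
      have := d' t
      have := hjt (t+1)
      omega
    obtain ⟨h, hh⟩ := ih M M' hMn hMn' hjM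
    obtain ⟨K1, hK1, hd, hs, hf⟩ := aux_compl (LinearMap.ker N) (LinearMap.range N)
    obtain ⟨K1', hK1', hd', hs', hf'⟩ := aux_compl (LinearMap.ker N') (LinearMap.range N')
    have e1 : Module.finrank k (LinearMap.ker M) =
        Module.finrank k (LinearMap.ker N ⊓ LinearMap.range N : Submodule k V) := by
      rw [← Submodule.finrank_map_subtype_eq]
      suffices hsub : Submodule.map (LinearMap.range N).subtype (LinearMap.ker M) =
          LinearMap.ker N ⊓ LinearMap.range N by rw [hsub]
      ext x
      simp only [Submodule.mem_map, LinearMap.mem_ker, Submodule.mem_inf]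
      constructor
      · rintro ⟨y, hy, rfl⟩
        exact ⟨by simpa [hM] using congrArg Subtype.val hy, y.2⟩
      · rintro ⟨h1, h2⟩
        exact ⟨⟨x, h2⟩, Subtype.ext h1, rfl⟩
    have e1' : Module.finrank k (LinearMap.ker M') =
        Module.finrank k (LinearMap.ker N' ⊓ LinearMap.range N' : Submodule k V') := by
      rw [← Submodule.finrank_map_subtype_eq]
      suffices hsub : Submodule.map (LinearMap.range N').subtype (LinearMap.ker M') =
          LinearMap.ker N' ⊓ LinearMap.range N' by rw [hsub]
      ext x
      simp only [Submodule.mem_map, LinearMap.mem_ker, Submodule.mem_inf]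
      constructor
      · rintro ⟨y, hy, rfl⟩
        exact ⟨by simpa [hM'] using congrArg Subtype.val hy, y.2⟩
      · rintro ⟨h1, h2⟩
        exact ⟨⟨x, h2⟩, Subtype.ext h1, rfl⟩
    have e2 : Module.finrank k K1 = Module.finrank k K1' := by
      have := hjM 1
      rw [pow_one, pow_one] at this
      omega
    let e : K1 ≃ₗ[k] K1' := LinearEquiv.ofFinrankEq _ _ e2
    obtain ⟨E, hE⟩ := LinearMap.exists_extend (K1'.subtype ∘ₗ e.toLinearMap)
    obtain ⟨W2, hW2, hc⟩ := hd.exists_isCompl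
    obtain ⟨g0, hg0W, hg0K⟩ : ∃ g0 : V →ₗ[k] V', (∀ w : LinearMap.range N, g0 w = h w) ∧
        ∀ x : K1, g0 x = e x := by
      refine ⟨LinearMap.ofIsCompl hc (E ∘ₗ W2.subtype)
        ((LinearMap.range N').subtype ∘ₗ h.toLinearMap), ?_, ?_⟩
      · intro w
        rw [LinearMap.ofIsCompl_apply_right]; rfl
      · intro x
        have := LinearMap.ofIsCompl_apply_left hc (φ := E ∘ₗ W2.subtype)
          (ψ := (LinearMap.range N').subtype ∘ₗ h.toLinearMap) ⟨x, hW2 x.2⟩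
        rw [this]
        exact LinearMap.congr_fun hE x
    obtain ⟨s, hsec⟩ := N'.rangeRestrict.exists_rightInverse_of_surjective
      N'.range_rangeRestrict
    have hsec' : ∀ w, N' (s w) = w := fun w => congrArg Subtype.val (LinearMap.congr_fun hsec w)
    let D : V →ₗ[k] LinearMap.range N' := N'.rangeRestrict ∘ₗ g0 - h.toLinearMap ∘ₗ N.rangeRestrict
    have hD : ∀ x, (D x : V') = N' (g0 x) - h (N.rangeRestrict x) := fun x => rfl
    have hDW : ∀ w : LinearMap.range N, D w = 0 := by
      intro w
      apply Subtype.ext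
      rw [hD, hg0W, ← hM', ← hh]
      exact sub_self _
    have hDK : ∀ x : K1, D x = 0 := by
      intro x
      apply Subtype.ext
      rw [hD, hg0K, LinearMap.mem_ker.1 (hK1' (e x).2)]
      have : N.rangeRestrict x = 0 := Subtype.ext (LinearMap.mem_ker.1 (hK1 x.2))
      rw [this]; simp
    let g : V →ₗ[k] V' := g0 - s ∘ₗ D
    have hg : ∀ x, g x = g0 x - s (D x) := fun x => rfl
    have hgW : ∀ w : LinearMap.range N, g w = h w := fun w => by rw [hg, hDW, hg0W]; simp
    have hgK : ∀ x : K1, g x = e x := fun x => by rw [hg, hDK, hg0K]; simp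
    have hgN : ∀ x, g (N x) = N' (g x) := by
      intro x
      rw [hg x, map_sub, hsec', hD]
      have : g (N x) = h (N.rangeRestrict x) := hgW (N.rangeRestrict x)
      rw [this]; abel
    have hinjK : ∀ x, N x = 0 → g x = 0 → x = 0 := by
      intro x hx hgx
      have : x ∈ K1 ⊔ (LinearMap.ker N ⊓ LinearMap.range N) := by rw [hs]; exact hx
      obtain ⟨a, ha, b, hb, rfl⟩ := Submodule.mem_sup.1 this
      have h1 := hgK ⟨a, ha⟩
      have h2 := hgW ⟨b, hb.2⟩
      simp only at h1 h2
      rw [map_add, h1, h2] at hgx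
      have h3 : (e ⟨a, ha⟩ : V') = 0 := by
        apply Submodule.disjoint_def.1 hd' _ (e ⟨a, ha⟩).2
        rw [eq_neg_of_add_eq_zero_left hgx]
        exact Submodule.neg_mem _ (h _).2
      have h4 : (h ⟨b, hb.2⟩ : V') = 0 := by rwa [h3, zero_add] at hgx
      have h5 : (⟨a, ha⟩ : K1) = 0 := e.map_eq_zero_iff.1 (Subtype.ext h3)
      have h6 : (⟨b, hb.2⟩ : LinearMap.range N) = 0 := h.map_eq_zero_iff.1 (Subtype.ext h4)
      rw [show a = 0 from congrArg Subtype.val h5, show b = 0 from congrArg Subtype.val h6, add_zero]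
    have hinj : ∀ m : ℕ, ∀ x, (N ^ m) x = 0 → g x = 0 → x = 0 := by
      intro m
      induction m with
      | zero => intro x hx _; simpa using hx
      | succ m ihm =>
        intro x hx hgx
        apply hinjK x _ hgx
        apply ihm
        · rwa [pow_succ, Module.End.mul_apply] at hx
        · rw [hgN, hgx, map_zero]
    have hker : Function.Injective g := by
      rw [← LinearMap.ker_eq_bot, LinearMap.ker_eq_bot']
      intro x hx
      exact hinj (n+1) x (by rw [hN]; rfl) hx
    exact ⟨LinearEquiv.ofInjectiveOfFinrankEq g hker hV, hgN⟩

theorem aux_prod {k : Type*} [Field k] (f : Polynomial k) (s : Multiset k)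
    (hs : ∀ x ∈ s, (Polynomial.X - Polynomial.C x) ∣ f) :
    (s.map (fun x => Polynomial.X - Polynomial.C x)).prod ∣ f ^ (Multiset.card s) := by
  induction s using Multiset.induction with
  | empty => simp
  | cons a s ih =>
    rw [Multiset.map_cons, Multiset.prod_cons, Multiset.card_cons, pow_succ']
    exact mul_dvd_mul (hs a (Multiset.mem_cons_self a s))
      (ih fun x hx => hs x (Multiset.mem_cons_of_mem hx))

theorem aux_sqrt_s7 {k R : Type*} [Field k] [IsAlgClosed k] (hchar : (2 : k) ≠ 0) [CommRing R]
    [Algebra k R] [FiniteDimensional k R] (a : R) (ha : IsUnit a) : ∃ y : R, y ^ 2 = a := by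
  classical
  have hsq : ∀ x : k, ∃ z : k, z ^ 2 = x := fun x => IsAlgClosed.exists_pow_nat_eq x two_pos
  choose r hr using hsq
  let p := minpoly k a
  have hp : p ≠ 0 := minpoly.ne_zero (Algebra.IsIntegral.isIntegral a)
  let q := Lagrange.interpolate p.roots.toFinset id r
  have hq : ∀ x ∈ p.roots, q.eval x = r x := fun x hx =>
    Lagrange.eval_interpolate_at_node (v := id) r (Function.injective_id.injOn) (Multiset.mem_toFinset.2 hx)
  have hdvd : p ∣ (q ^ 2 - Polynomial.X) ^ (Multiset.card p.roots) := by
    have hsp := (IsAlgClosed.splits p).eq_prod_roots_of_monic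
      (minpoly.monic (Algebra.IsIntegral.isIntegral a))
    have h1 := aux_prod (q ^ 2 - Polynomial.X) p.roots (fun x hx => by
      rw [Polynomial.dvd_iff_isRoot]
      simp [hq x hx, hr])
    rwa [← hsp] at h1
  have hn : IsNilpotent ((Polynomial.aeval a q) ^ 2 - a) := by
    refine ⟨Multiset.card p.roots, ?_⟩
    · obtain ⟨c, hc⟩ := hdvd
      have := congrArg (Polynomial.aeval a) hc
      rw [map_mul, minpoly.aeval, zero_mul] at this
      simpa using this
  have h2 : IsUnit (2 : R) := by
    have := (isUnit_iff_ne_zero.2 hchar).map (algebraMap k R)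
    rwa [map_ofNat] at this
  set y := Polynomial.aeval a q
  have hy : IsUnit y := by
    have : IsUnit (y ^ 2) := by
      have := hn.isUnit_add_left_of_commute ha (Commute.all _ _)
      simpa using this
    exact (isUnit_pow_iff two_ne_zero).1 this
  obtain ⟨z, ⟨-, hz⟩, -⟩ := Polynomial.existsUnique_nilpotent_sub_and_aeval_eq_zero (S := R)
    (P := (Polynomial.X ^ 2 - Polynomial.C a : Polynomial R)) (x := y) (by simpa using hn)
    (by simpa [one_add_one_eq_two] using h2.mul hy)
  exact ⟨z, by simpa [sub_eq_zero] using hz⟩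

/-- Two skew-adjoint nilpotent endomorphisms of a quadratic space over an algebraically
closed field of characteristic ≠ 2 with the same Jordan type are conjugate by an element
of the full orthogonal group. -/
theorem stmt7 (k : Type*) [Field k] [IsAlgClosed k] (hchar : (2 : k) ≠ 0)
    (V : Type*) [AddCommGroup V] [Module k V] [FiniteDimensional k V]
    (B : V →ₗ[k] V →ₗ[k] k)
    (hBnd : ∀ x : V, (∀ y : V, B x y = 0) → x = 0)
    (hsymm : ∀ x y : V, B x y = B y x)
    (N N' : Module.End k V)
    (hskew : ∀ x y : V, B (N x) y = - B x (N y))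
    (hskew' : ∀ x y : V, B (N' x) y = - B x (N' y))
    (hnil : IsNilpotent N) (hnil' : IsNilpotent N')
    (hjt : ∀ t : ℕ, Module.finrank k ↥(LinearMap.ker (N ^ t)) =
      Module.finrank k ↥(LinearMap.ker (N' ^ t))) :
    ∃ g : V ≃ₗ[k] V,
      (∀ x y : V, B (g x) (g y) = B x y) ∧
      (∀ w : V, g (N (g.symm w)) = N' w) := by
  obtain ⟨n, hn⟩ := hnil
  obtain ⟨n', hn'⟩ := hnil'
  have hnn : N ^ (n + n') = 0 := by rw [pow_add, hn, zero_mul]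
  have hnn' : N' ^ (n + n') = 0 := by rw [pow_add, hn', mul_zero]
  obtain ⟨h, hh⟩ := aux_sim (n + n') N N' hnn hnn' hjt
  have hBinj : Function.Injective B := by
    rw [← LinearMap.ker_eq_bot, LinearMap.ker_eq_bot']
    intro x hx
    exact hBnd x fun y => by rw [hx]; rfl
  let Be : V ≃ₗ[k] Module.Dual k V :=
    LinearEquiv.ofInjectiveOfFinrankEq B hBinj Subspace.dual_finrank_eq.symm
  have hBe : ∀ x y, Be x y = B x y := fun x y => rfl
  have ext' : ∀ x x' : V, (∀ y, B x y = B x' y) → x = x' := fun x x' hxx =>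
    hBinj (LinearMap.ext hxx)
  let A : Module.End k V := Be.symm.toLinearMap ∘ₗ (B.compl₁₂ h.toLinearMap h.toLinearMap)
  have hA : ∀ x y, B (A x) y = B (h x) (h y) := by
    intro x y
    rw [← hBe]
    simp [A]
  have hAinj : Function.Injective A := by
    rw [← LinearMap.ker_eq_bot, LinearMap.ker_eq_bot']
    intro x hx
    have : h x = 0 := hBnd _ fun y => by
      have := hA x (h.symm y)
      rw [hx, h.apply_symm_apply] at this
      simpa using this.symm
    simpa using this
  have hAN : Commute A N := by
    apply LinearMap.ext
    intro x
    apply ext'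
    intro y
    rw [Module.End.mul_apply, Module.End.mul_apply, hA, hh, hskew', ← hh, ← hA, hskew]
  have hAself : ∀ x y, B (A x) y = B x (A y) := by
    intro x y
    rw [hA, hsymm x, hA, hsymm]
  let R := Algebra.adjoin k {A}
  letI : CommRing R := Algebra.adjoinCommRingOfComm k (by
    rintro a rfl b hb
    rw [Set.mem_singleton_iff.1 hb])
  let a : R := ⟨A, Algebra.subset_adjoin rfl⟩
  have ha : IsUnit a := by
    have hi : Function.Injective (LinearMap.mulLeft k a) := by
      intro u v huv
      apply Subtype.ext
      apply LinearMap.ext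
      intro x
      apply hAinj
      exact LinearMap.congr_fun (congrArg Subtype.val huv) x
    obtain ⟨b, hb⟩ := LinearMap.injective_iff_surjective.1 hi 1
    exact IsUnit.of_mul_eq_one b hb
  obtain ⟨c, hc⟩ := aux_sqrt_s7 hchar a ha
  let C : Module.End k V := c
  have hC : C * C = A := by
    have := congrArg Subtype.val hc
    rw [pow_two] at this
    exact this
  have hCN : Commute C N := by
    have : ∀ z ∈ Algebra.adjoin k {A}, Commute z N := by
      intro z hz
      induction hz using Algebra.adjoin_induction with
      | mem x hx => rw [Set.mem_singleton_iff.1 hx]; exact hAN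
      | algebraMap r => exact Algebra.commutes r N
      | add x y _ _ hx hy => exact hx.add_left hy
      | mul x y _ _ hx hy => exact hx.mul_left hy
    exact this _ c.2
  have hCself : ∀ x y, B (C x) y = B x (C y) := by
    have : ∀ z : Module.End k V, ∀ hz : z ∈ Algebra.adjoin k {A},
        ∀ x y, B (z x) y = B x (z y) := by
      intro z hz
      induction hz using Algebra.adjoin_induction with
      | mem x hx => rw [Set.mem_singleton_iff.1 hx]; exact hAself
      | algebraMap r => intro x y; simp [Module.algebraMap_end_apply]
      | add u v _ _ hu hv => intro x y; simp [hu, hv]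
      | mul u v hu' hv' hu hv =>
        intro x y
        have huv : u * v = v * u :=
          congrArg Subtype.val (mul_comm (⟨u, hu'⟩ : R) ⟨v, hv'⟩)
        rw [Module.End.mul_apply, hu, hv, ← Module.End.mul_apply, ← huv]
    exact this _ c.2
  have hCinj : Function.Injective C := by
    intro x y hxy
    apply hAinj
    rw [← hC, Module.End.mul_apply, Module.End.mul_apply, hxy]
  let Ce : V ≃ₗ[k] V := LinearEquiv.ofInjectiveEndo C hCinj
  have hCe : ∀ x, Ce x = C x := fun x => rfl
  have key : ∀ x y, B (h x) (h y) = B (C x) (C y) := by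
    intro x y
    rw [← hA, ← hC, Module.End.mul_apply, hCself]
  refine ⟨Ce.symm.trans h, ?_, ?_⟩
  · intro x y
    rw [LinearEquiv.trans_apply, LinearEquiv.trans_apply, key, ← hCe, ← hCe,
      Ce.apply_symm_apply, Ce.apply_symm_apply]
  · intro w
    have h1 : ∀ x, Ce.symm (N (Ce x)) = N x := by
      intro x
      rw [LinearEquiv.symm_apply_eq, hCe, hCe]
      exact (LinearMap.congr_fun hCN x).symm
    change h (Ce.symm (N (Ce (h.symm w)))) = N' w
    rw [h1, hh, h.apply_symm_apply]
end

section
/- Let k be a field, let V be a finite-dimensional k-vector space with a nondegenerate alternating bilinear form ⟨·,·⟩, let N be a skew-adjoint endomorphism of V, and let i ≥ 2 be an even integer with N^i = 0 and ker N ⊆ range(N^{i−1}). Then: (a) for all v', v'', w' ∈ V with N^{i−1} v' = N^{i−1} v'', one has ⟨v', N^{i−1} w'⟩ = ⟨v'', N^{i−1} w'⟩, so B(N^{i−1} v', N^{i−1} w') := ⟨v', N^{i−1} w'⟩ is a well-defined bilinear form B on ker N = range(N^{i−1}); (b) B is symmetric; (c) B is nondegenerate: if v ∈ ker N satisfies B(v,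 w) = 0 for all w ∈ ker N, then v = 0. -/
/-- In the symplectic case with `i` even, the bilinear form
`B(N^(i-1) v', N^(i-1) w') := ⟨v', N^(i-1) w'⟩` on `ker N = range N^(i-1)` is
(a) well defined, (b) symmetric, and (c) nondegenerate. -/
theorem stmt9 (k : Type*) [Field k]
    (V : Type*) [AddCommGroup V] [Module k V] [FiniteDimensional k V]
    (B : V →ₗ[k] V →ₗ[k] k)
    (hBnd : ∀ x : V, (∀ y : V, B x y = 0) → x = 0)
    (halt : ∀ x : V, B x x = 0)
    (N : Module.End k V)
    (hskew : ∀ x y : V, B (N x) y = - B x (N y))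
    (i : ℕ) (hieven : Even i) (hi : 2 ≤ i)
    (hNi : N ^ i = 0)
    (hker : LinearMap.ker N ≤ LinearMap.range (N ^ (i - 1))) :
    (∀ v' v'' w' : V, (N ^ (i - 1)) v' = (N ^ (i - 1)) v'' →
      B v' ((N ^ (i - 1)) w') = B v'' ((N ^ (i - 1)) w')) ∧
    (∀ v' w' : V, B v' ((N ^ (i - 1)) w') = B w' ((N ^ (i - 1)) v')) ∧
    (∀ v' : V, (∀ w' : V, B v' ((N ^ (i - 1)) w') = 0) → (N ^ (i - 1)) v' = 0) := by
  have hpow : ∀ (n : ℕ) (x y : V), B ((N ^ n) x) y = (-1) ^ n * B x ((N ^ n) y) := by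
    intro n
    induction n with
    | zero => intro x y; simp
    | succ n ih =>
      intro x y
      have h1 : (N ^ (n + 1)) x = (N ^ n) (N x) := by rw [pow_succ]; rfl
      have h2 : (N ^ (n + 1)) y = N ((N ^ n) y) := by rw [pow_succ']; rfl
      rw [h1, h2, ih, hskew, pow_succ]
      ring
  have hodd : Odd (i - 1) := Nat.Even.sub_odd (by omega) hieven odd_one
  have hM : ∀ x y : V, B x ((N ^ (i - 1)) y) = - B ((N ^ (i - 1)) x) y := by
    intro x y
    rw [hpow, hodd.neg_one_pow]
    ring
  have hsymm : ∀ x y : V, B x y = - B y x := by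
    intro x y
    have h := halt (x + y)
    simp only [map_add, LinearMap.add_apply, halt, zero_add, add_zero] at h
    first
      | exact eq_neg_of_add_eq_zero_left h
      | exact eq_neg_of_add_eq_zero_right h
  refine ⟨?_, ?_, ?_⟩
  · intro v' v'' w' h
    rw [hM, hM, h]
  · intro v' w'
    rw [hM, hsymm, neg_neg]
  · intro v' h
    apply hBnd
    intro y
    have h' := h y
    rw [hM] at h'
    exact neg_eq_zero.mp h'
end

section
/- Let p be an odd prime, q a power of p, K an algebraically closed field of characteristic p, and let V be a finite-dimensional K-vector space with a nondegenerate alternating bilinear form ⟨·,·⟩. Let φ : V → V be an additive bijection satisfying φ(a v) = a^q φ(v) for all a ∈ K, v ∈ V and ⟨φ x, φ y⟩ = ⟨x, y⟩^q for all x, y ∈ V. Let N be a skew-adjoint nilpotent endomorphism of V with φ ∘ N = N ∘ φ, and suppose V = V₁ ⊕ V₂ ⊕ ⋯ is a direct sum of pairwise orthogonal subspaces, each stable under N and under φ, such that for every j the restriction N|_{V_j} has Jordan type (j^{m_j}), i.e., (N|_{V_j})^j = 0 and ker(N|_{V_j}) ⊆ range((N|_{V_j})^{j−1}). Fix an index i,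 let x ∈ ker N ∩ V_i be nonzero with φ(x) = x, and let v ∈ ker N ∩ (⊕_{j>i} V_j) satisfy φ(v) = v. Then there exists a K-linear automorphism g of V such that ⟨g a, g b⟩ = ⟨a, b⟩ for all a, b ∈ V, g ∘ N = N ∘ g, g ∘ φ = φ ∘ g, and g(x) = x + v. -/
open Polynomial in
theorem lang_aux (p q : ℕ) (hp : p.Prime) (hq : ∃ e : ℕ, 0 < e ∧ q = p ^ e)
    (K : Type*) [Field K] [IsAlgClosed K] [CharP K p] (a : ℕ → K) (n : ℕ) :
    ∃ c : ℕ → K, c 0 = a 0 * (c n) ^ q - 1 ∧ ∀ k, c (k+1) = (c k) ^ q + a (k+1) * (c n) ^ q := by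
  have hq0 : (q : K) = 0 := by
    obtain ⟨e, he, rfl⟩ := hq
    simp [he.ne']
  let P : ℕ → K[X] := fun k => Nat.rec (C (a 0) * X ^ q - 1)
    (fun k r => r ^ q + C (a (k+1)) * X ^ q) k
  have hP0 : P 0 = C (a 0) * X ^ q - 1 := rfl
  have hPs : ∀ k, P (k+1) = (P k) ^ q + C (a (k+1)) * X ^ q := fun k => rfl
  have hd : ∀ k, derivative (P k) = 0 := by
    intro k
    cases k with
    | zero => rw [hP0]; simp [derivative_X_pow, hq0]
    | succ k => rw [hPs]; simp [derivative_pow, hq0]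
  have hdeg : (P n - X).degree ≠ 0 := by
    intro h
    have h1 := eq_C_of_degree_eq_zero h
    have h2 : derivative (P n - X) = 0 := by rw [h1]; simp
    simp [hd] at h2
  obtain ⟨r, hr⟩ := IsAlgClosed.exists_root _ hdeg
  have hr' : (P n).eval r = r := by
    have : (P n).eval r - r = 0 := by simpa [IsRoot] using hr
    exact sub_eq_zero.mp this
  refine ⟨fun k => (P k).eval r, ?_, fun k => ?_⟩
  · simp only [hr']; rw [hP0]; simp
  · simp only [hr']; rw [hPs]; simp

theorem lang_add (p q : ℕ) (hp : p.Prime) (hq : ∃ e : ℕ, 0 < e ∧ q = p ^ e)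
    (K : Type*) [Field K] [IsAlgClosed K] [CharP K p]
    (V : Type*) [AddCommGroup V] [Module K V] [FiniteDimensional K V]
    (φ : V →+ V) (hφsmul : ∀ (a : K) (w : V), φ (a • w) = a ^ q • φ w)
    (M : Submodule K V) (hM : ∀ w ∈ M, φ w ∈ M) (z : V) (hz : z ∈ M) :
    ∃ m ∈ M, φ m - m = z := by
  have hmem : ∀ k, φ^[k] z ∈ M := by
    intro k
    induction k with
    | zero => simpa
    | succ k ih => rw [Function.iterate_succ_apply']; exact hM _ ih
  let F : ℕ →o Submodule K V :=
    ⟨fun n => Submodule.span K ((fun k => φ^[k] z) '' (Finset.range n : Finset ℕ)), by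
      intro a b hab
      apply Submodule.span_mono
      apply Set.image_mono
      simpa using hab⟩
  obtain ⟨n, hn⟩ := monotone_stabilizes_iff_noetherian.mpr (inferInstance : IsNoetherian K V) F
  have h1 : φ^[n] z ∈ F n := by
    rw [hn (n+1) (by omega)]
    apply Submodule.subset_span
    exact ⟨n, by simp, rfl⟩
  obtain ⟨a, ha⟩ := (Submodule.mem_span_image_finset_iff_exists_fun' K).mp h1
  cases n with
  | zero =>
    have : z = 0 := by simpa using ha.symm
    exact ⟨0, M.zero_mem, by simp [this]⟩
  | succ n =>
    obtain ⟨c, hc0, hcs⟩ := lang_aux p q hp hq K a n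
    refine ⟨∑ k ∈ Finset.range (n+1), c k • φ^[k] z,
      M.sum_mem fun k _ => M.smul_mem _ (hmem k), ?_⟩
    have e1 : φ (∑ k ∈ Finset.range (n+1), c k • φ^[k] z)
        = ∑ k ∈ Finset.range (n+1), (c k) ^ q • φ^[k+1] z := by
      rw [map_sum]
      refine Finset.sum_congr rfl fun k _ => ?_
      rw [hφsmul, Function.iterate_succ_apply']
    rw [e1, Finset.sum_range_succ, ← ha, Finset.smul_sum, Finset.sum_range_succ' _ n,
      Finset.sum_range_succ' (fun k => c k • φ^[k] z) n, hc0]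
    simp only [hcs, add_smul, sub_smul, Finset.sum_add_distrib, smul_smul, one_smul,
      Function.iterate_zero, id, mul_comm]
    abel

/-- affine version -/
theorem lang_fix (p q : ℕ) (hp : p.Prime) (hq : ∃ e : ℕ, 0 < e ∧ q = p ^ e)
    (K : Type*) [Field K] [IsAlgClosed K] [CharP K p]
    (V : Type*) [AddCommGroup V] [Module K V] [FiniteDimensional K V]
    (φ : V →+ V) (hφsmul : ∀ (a : K) (w : V), φ (a • w) = a ^ q • φ w)
    (M : Submodule K V) (hM : ∀ w ∈ M, φ w ∈ M) (z : V) (hz : φ z - z ∈ M) :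
    ∃ m ∈ M, φ (z + m) = z + m := by
  obtain ⟨m, hm, h⟩ := lang_add p q hp hq K V φ hφsmul M hM _ (M.neg_mem hz)
  refine ⟨m, hm, ?_⟩
  rw [map_add]
  have : φ m = m + -(φ z - z) := by rw [← h]; abel
  rw [this]; abel

/-- Cayley transform step. -/
theorem cayley_aux (K : Type*) [Field K] (h2 : (2 : K) ≠ 0)
    (V : Type*) [AddCommGroup V] [Module K V]
    (B : V →ₗ[K] V →ₗ[K] K) (φ : V →+ V) (N S : Module.End K V)
    (hS : ∀ a b, B (S a) b = - B a (S b)) (hSN : ∀ w, S (N w) = N (S w))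
    (hSφ : ∀ w, S (φ w) = φ (S w)) (hnil : IsNilpotent S) (x v : V)
    (hx : S x = v) (hv : S v = 0) :
    ∃ g : V ≃ₗ[K] V,
      (∀ a b : V, B (g a) (g b) = B a b) ∧
      (∀ w : V, g (N w) = N (g w)) ∧
      (∀ w : V, g (φ w) = φ (g w)) ∧
      g x = x + v := by
  have hu : IsUnit ((2 : K) • (1 : Module.End K V)) := by
    rw [Algebra.smul_def, mul_one]
    exact (IsUnit.mk0 _ h2).map (algebraMap K (Module.End K V))
  have hc : Commute S ((2 : K) • (1 : Module.End K V)) := (Commute.one_right S).smul_right _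
  have hP := hnil.isUnit_add_left_of_commute hu hc
  have hQ := hnil.neg.isUnit_add_left_of_commute hu hc.neg_left
  rw [Module.End.isUnit_iff] at hP hQ
  let P := LinearEquiv.ofBijective _ hP
  let Q := LinearEquiv.ofBijective _ hQ
  have hPa : ∀ a, P a = a + a + S a := fun a => by
    change ((2 : K) • (1 : Module.End K V) + S) a = _
    simp [two_smul]
  have hQa : ∀ a, Q a = a + a - S a := fun a => by
    change ((2 : K) • (1 : Module.End K V) + -S) a = _
    simp [two_smul, sub_eq_add_neg]
  let g := Q.symm.trans P
  have hg : ∀ a, g (Q a) = P a := fun a => by simp [g]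
  have hsur : ∀ a, ∃ b, Q b = a := Q.surjective
  refine ⟨g, fun a b => ?_, fun a => ?_, fun a => ?_, ?_⟩
  · obtain ⟨a, rfl⟩ := hsur a
    obtain ⟨b, rfl⟩ := hsur b
    rw [hg, hg, hPa, hPa, hQa, hQa]
    simp only [map_add, map_sub, LinearMap.add_apply, LinearMap.sub_apply, hS]
    ring
  · obtain ⟨a, rfl⟩ := hsur a
    have : N (Q a) = Q (N a) := by simp only [hQa, map_add, map_sub, hSN]
    rw [this, hg, hg]
    simp only [hPa, map_add, hSN]
  · obtain ⟨a, rfl⟩ := hsur a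
    have : φ (Q a) = Q (φ a) := by simp only [hQa, map_add, map_sub, hSφ]
    rw [this, hg, hg]
    simp only [hPa, map_add, hSφ]
  · have h4 : (4 : K) ≠ 0 := by
      have : (4 : K) = 2 * 2 := by norm_num
      rw [this]; exact mul_ne_zero h2 h2
    have e : Q ((2 : K) • x + v) = (4 : K) • x := by
      rw [hQa]; simp only [map_add, map_smul, hx, hv]; module
    have e2 : g ((4 : K) • x) = (4 : K) • (x + v) := by
      rw [← e, hg, hPa]; simp only [map_add, map_smul, hx, hv]; module
    rw [map_smul] at e2
    exact smul_right_injective V h4 e2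

theorem nil_aux {R : Type*} [Ring R] (N S A : R) (hSN : S * N = N * S) (h : S * S = N * A)
    (hN : IsNilpotent N) : IsNilpotent S := by
  obtain ⟨m, hm⟩ := hN
  have hc : ∀ k, Commute (S * S) (N ^ k) := fun k =>
    Commute.pow_right (Commute.mul_left hSN hSN) k
  have key : ∀ k, ∃ C, (S * S) ^ k = N ^ k * C := by
    intro k
    induction k with
    | zero => exact ⟨1, by simp⟩
    | succ k ih =>
      obtain ⟨C, hC⟩ := ih
      refine ⟨A * C, ?_⟩
      rw [pow_succ', hC, ← mul_assoc, (hc k).eq, h, pow_succ]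
      simp only [mul_assoc]
  obtain ⟨C, hC⟩ := key m
  refine ⟨2 * m, ?_⟩
  rw [pow_mul, pow_two, hC, hm, zero_mul]

/-- Main construction once `u`, `w` have been found. -/
theorem construct_aux (q : ℕ)
    (K : Type*) [Field K] (h2 : (2 : K) ≠ 0) (hneg : ((-1 : K)) ^ q = -1)
    (V : Type*) [AddCommGroup V] [Module K V]
    (B : V →ₗ[K] V →ₗ[K] K)
    (hBnd : ∀ x : V, (∀ y : V, B x y = 0) → x = 0)
    (hsymm : ∀ x y : V, B x y = - B y x)
    (φ : V →+ V)
    (hφsmul : ∀ (a : K) (w : V), φ (a • w) = a ^ q • φ w)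
    (hφB : ∀ x y : V, B (φ x) (φ y) = (B x y) ^ q)
    (N : Module.End K V)
    (hskew : ∀ x y : V, B (N x) y = - B x (N y))
    (hnil : IsNilpotent N)
    (hNφ : ∀ w : V, φ (N w) = N (φ w))
    (n : ℕ) (x v u w : V) (hx : N x = 0) (hv : N v = 0)
    (hφu : φ u = u) (hφw : φ w = w) (hxu : B x u = 1) (hNu : (N ^ (n+1)) u = 0)
    (hwv : (N ^ (n+1)) w = v)
    (hwu : ∀ k l, B ((N ^ k) w) ((N ^ l) u) = 0)
    (hwx : ∀ k, B ((N ^ k) w) x = 0) :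
    ∃ g : V ≃ₗ[K] V,
      (∀ a b : V, B (g a) (g b) = B a b) ∧
      (∀ w : V, g (N w) = N (g w)) ∧
      (∀ w : V, g (φ w) = φ (g w)) ∧
      g x = x + v := by
  have hBnd' : ∀ x y : V, (∀ z, B z x = B z y) → x = y := by
    intro a b h
    refine sub_eq_zero.mp (hBnd _ fun z => ?_)
    rw [hsymm, map_sub, h z, sub_self, neg_zero]
  have hφN : ∀ k z, φ ((N ^ k) z) = (N ^ k) (φ z) := by
    intro k
    induction k with
    | zero => simp
    | succ k ih => intro z; rw [pow_succ, Module.End.mul_apply, ih, hNφ]; rfl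
  have hnegk : ∀ k : ℕ, ((-1 : K) ^ k) ^ q = (-1) ^ k := by
    intro k; rw [← pow_mul, mul_comm, pow_mul, hneg]
  have hpow0 : ∀ z, N z = 0 → ∀ k, (N ^ (k+1)) z = 0 := by
    intro z hz k; rw [pow_succ, Module.End.mul_apply, hz, map_zero]
  let T0 : Module.End K V := ∑ k ∈ Finset.range (n+1),
    (-1 : K) ^ k • (B.flip ((N ^ k) u)).smulRight ((N ^ (n-k)) w)
  let T : Module.End K V := N * T0
  let R : Module.End K V := ∑ k ∈ Finset.range (n+1),
    (-1 : K) ^ k • (B ((N ^ (n-k+1)) w)).smulRight ((N ^ k) u)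
  have hT : ∀ a, T a = ∑ k ∈ Finset.range (n+1),
      ((-1 : K) ^ k * B a ((N ^ k) u)) • (N ^ (n-k+1)) w := by
    intro a
    simp [T, T0, LinearMap.sum_apply, smul_smul, pow_succ']
  have hR : ∀ a, R a = ∑ k ∈ Finset.range (n+1),
      ((-1 : K) ^ k * B ((N ^ (n-k+1)) w) a) • (N ^ k) u := by
    intro a
    simp [R, LinearMap.sum_apply, smul_smul]
  have hadj : ∀ a b, B (T a) b = B a (R b) := by
    intro a b
    rw [hT, hR]
    simp only [map_sum, map_smul, LinearMap.sum_apply, LinearMap.smul_apply, smul_eq_mul]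
    exact Finset.sum_congr rfl fun k _ => by ring
  have hadj' : ∀ a b, B (R a) b = B a (T b) := by
    intro a b
    rw [hsymm, ← hadj, hsymm a]
  have hTN : ∀ a, T (N a) = N (T a) := by
    intro a
    rw [hT, hT, map_sum, Finset.sum_range_succ, Finset.sum_range_succ']
    have e1 : B (N a) ((N ^ n) u) = 0 := by
      rw [hskew, ← Module.End.mul_apply, ← pow_succ', hNu]; simp
    have e2 : N ((N ^ (n - 0 + 1)) w) = 0 := by
      rw [Nat.sub_zero, hwv, hv]
    rw [e1, map_smul, e2]
    simp only [mul_zero, zero_smul, smul_zero, add_zero]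
    refine Finset.sum_congr rfl fun k hk => ?_
    have hk' : n - k = n - (k+1) + 1 := by
      have := Finset.mem_range.mp hk; omega
    rw [hskew, map_smul, ← Module.End.mul_apply, ← pow_succ', ← Module.End.mul_apply,
      ← pow_succ', hk']
    congr 1
    ring
  have hRN : ∀ a, R (N a) = N (R a) := by
    intro b
    refine hBnd' _ _ fun a => ?_
    have := hskew a (R b)
    rw [← hadj, ← neg_neg (B a (N (R b))), ← this, ← hadj, hTN, hskew, neg_neg]
  have hTφ : ∀ a, T (φ a) = φ (T a) := by
    intro a
    rw [hT, hT, map_sum]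
    refine Finset.sum_congr rfl fun k _ => ?_
    rw [hφsmul, hφN, hφw, mul_pow, hnegk, ← hφB, hφN, hφu]
  have hRφ : ∀ a, R (φ a) = φ (R a) := by
    intro a
    rw [hR, hR, map_sum]
    refine Finset.sum_congr rfl fun k _ => ?_
    rw [hφsmul, hφN, hφu, mul_pow, hnegk, ← hφB, hφN, hφw]
  have hRR : R * R = 0 := by
    ext a
    rw [Module.End.mul_apply, hR (R a), hR a]
    simp [map_sum, hwu]
  have hTNm : T * N = N * T := LinearMap.ext hTN
  have hRNm : R * N = N * R := LinearMap.ext hRN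
  have hTe : T = N * T0 := rfl
  have hsq : (T - R) * (T - R) = N * (T0 * T - T0 * R - R * T0) := by
    have : R * T = N * (R * T0) := by rw [hTe, ← mul_assoc, hRNm, mul_assoc]
    have e1 : T * T = N * (T0 * T) := by rw [← mul_assoc N T0 T]
    have e2 : T * R = N * (T0 * R) := by rw [← mul_assoc N T0 R]
    rw [sub_mul, mul_sub, mul_sub, hRR, this, mul_sub, mul_sub, e1, e2]
    abel
  have hSnil : IsNilpotent (T - R) := by
    refine nil_aux N _ _ ?_ hsq hnil
    rw [sub_mul, mul_sub, hTNm, hRNm]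
  refine cayley_aux K h2 V B φ N (T - R) ?_ ?_ ?_ hSnil x v ?_ ?_
  · intro a b
    simp only [LinearMap.sub_apply, map_sub, hadj, hadj']; ring
  · intro a
    simp only [LinearMap.sub_apply, map_sub, hTN, hRN]
  · intro a
    simp only [LinearMap.sub_apply, map_sub, hTφ, hRφ]
  · have e1 : R x = 0 := by
      rw [hR]; simp [hwx]
    rw [LinearMap.sub_apply, e1, sub_zero, hT, Finset.sum_range_succ']
    rw [Finset.sum_eq_zero]
    · simp [hxu, hwv]
    · intro k _
      rw [pow_succ' N, Module.End.mul_apply, ← neg_neg (B x _), ← hskew, hx]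
      simp
  · have e1 : R v = 0 := by
      rw [hR]
      refine Finset.sum_eq_zero fun k _ => ?_
      rw [pow_succ', Module.End.mul_apply, hskew, hv]; simp
    have e2 : T v = 0 := by
      rw [hT]
      refine Finset.sum_eq_zero fun k _ => ?_
      rw [← hwv, hwu]; simp
    rw [LinearMap.sub_apply, e1, e2, sub_zero]

/-- Existence of an element of `Z_{Sp(V)}(N)^{F'}` moving `x` to `x + v`: given a
`q`-Frobenius `φ` on a symplectic space `V` over an algebraically closed field of odd
characteristic `p`, a `φ`-equivariant skew-adjoint nilpotent `N`, an orthogonal,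
`N`-stable and `φ`-stable decomposition `V = ⨁ⱼ Wⱼ` with `N|_{Wⱼ}` of Jordan type
`(j^{mⱼ})`, a nonzero `φ`-fixed `x ∈ ker N ∩ W i` and a `φ`-fixed
`v ∈ ker N ∩ ⨁_{j>i} Wⱼ`, there is a symplectic automorphism `g` commuting with `N` and
with `φ` such that `g x = x + v`. -/
theorem stmt19 (p q : ℕ) (hp : p.Prime) (hpodd : Odd p)
    (hq : ∃ e : ℕ, 0 < e ∧ q = p ^ e)
    (K : Type*) [Field K] [IsAlgClosed K] [CharP K p]
    (V : Type*) [AddCommGroup V] [Module K V] [FiniteDimensional K V]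
    (B : V →ₗ[K] V →ₗ[K] K)
    (hBnd : ∀ x : V, (∀ y : V, B x y = 0) → x = 0)
    (halt : ∀ x : V, B x x = 0)
    (φ : V → V) (hφbij : Function.Bijective φ)
    (hφadd : ∀ x y : V, φ (x + y) = φ x + φ y)
    (hφsmul : ∀ (a : K) (w : V), φ (a • w) = a ^ q • φ w)
    (hφB : ∀ x y : V, B (φ x) (φ y) = (B x y) ^ q)
    (N : Module.End K V)
    (hskew : ∀ x y : V, B (N x) y = - B x (N y))
    (hnil : IsNilpotent N)
    (hNφ : ∀ w : V, φ (N w) = N (φ w))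
    (W : ℕ → Submodule K V)
    (hint : DirectSum.IsInternal W)
    (horth : ∀ j j' : ℕ, j ≠ j' → ∀ x ∈ W j, ∀ y ∈ W j', B x y = 0)
    (hNW : ∀ j : ℕ, ∀ x ∈ W j, N x ∈ W j)
    (hφW : ∀ j : ℕ, ∀ x ∈ W j, φ x ∈ W j)
    (hJordanPow : ∀ j : ℕ, ∀ x ∈ W j, (N ^ j) x = 0)
    (hJordanKer : ∀ j : ℕ, ∀ x ∈ W j, N x = 0 → ∃ y ∈ W j, (N ^ (j - 1)) y = x)
    (i : ℕ) (x : V) (hxW : x ∈ W i) (hxker : N x = 0) (hxne : x ≠ 0) (hφx : φ x = x)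
    (v : V) (hvW : v ∈ ⨆ j > i, W j) (hvker : N v = 0) (hφv : φ v = v) :
    ∃ g : V ≃ₗ[K] V,
      (∀ a b : V, B (g a) (g b) = B a b) ∧
      (∀ w : V, g (N w) = N (g w)) ∧
      (∀ w : V, g (φ w) = φ (g w)) ∧
      g x = x + v := by

  have hsymm : ∀ x y : V, B x y = - B y x := by
    intro a b
    have := halt (a + b)
    simp only [map_add, LinearMap.add_apply, halt, zero_add, add_zero] at this
    exact eq_neg_of_add_eq_zero_right this
  have hq0 : q ≠ 0 := by
    obtain ⟨e, _, rfl⟩ := hq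
    exact pow_ne_zero _ hp.ne_zero
  have hqodd : Odd q := by
    obtain ⟨e, _, rfl⟩ := hq
    exact hpodd.pow
  have h2 : (2 : K) ≠ 0 := by
    intro h
    have h' : ((2 : ℕ) : K) = 0 := by exact_mod_cast h
    rw [CharP.cast_eq_zero_iff K p] at h'
    have := (Nat.prime_dvd_prime_iff_eq hp Nat.prime_two).mp h'
    subst this
    exact absurd hpodd (by decide)
  let Φ : V →+ V := ⟨⟨φ, by simpa using hφadd 0 0⟩, hφadd⟩
  have hΦ : ∀ w, Φ w = φ w := fun _ => rfl
  have hΦN : ∀ k z, Φ ((N ^ k) z) = (N ^ k) (Φ z) := by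
    intro k
    induction k with
    | zero => simp
    | succ k ih =>
      intro z
      rw [pow_succ, Module.End.mul_apply, ih, hΦ, hNφ]; rfl
  have hNWk : ∀ k j, ∀ z ∈ W j, (N ^ k) z ∈ W j := by
    intro k j
    induction k with
    | zero => simp
    | succ k ih => intro z hz; rw [pow_succ', Module.End.mul_apply]; exact hNW _ _ (ih z hz)
  have htop : ∀ z : V, z ∈ ⨆ j, W j := by
    rw [hint.submodule_iSup_eq_top]; simp
  -- if `z` in `W j` pairs trivially with `W j` then `z = 0`
  have hnd : ∀ j, ∀ z ∈ W j, (∀ y ∈ W j, B z y = 0) → z = 0 := by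
    intro j z hz h
    refine hBnd z fun y => ?_
    refine Submodule.iSup_induction W (motive := fun y => B z y = 0) (htop y) ?_ (by simp) ?_
    · intro k y hy
      by_cases hk : k = j
      · subst hk; exact h y hy
      · exact horth j k (Ne.symm hk) z hz y hy
    · intro a b ha hb; rw [map_add, ha, hb, add_zero]
  obtain ⟨n, rfl⟩ : ∃ n, i = n + 1 := by
    cases i with
    | zero => exact absurd (by simpa using hJordanPow 0 x hxW) hxne
    | succ n => exact ⟨n, rfl⟩
  set U : Submodule K V := ⨆ j > n + 1, W j with hU
  have hWU : ∀ j > n + 1, W j ≤ U := fun j hj => le_iSup₂_of_le j hj le_rfl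
  have hdec : ∀ z ∈ U, ∃ f : ℕ →₀ V, (∀ j, f j ∈ W j) ∧ (∀ j, j ≤ n + 1 → f j = 0) ∧
      (∑ j ∈ f.support, f j) = z := by
    intro z hz
    obtain ⟨f, hf, hs⟩ := (Submodule.mem_iSup_iff_exists_finsupp _ _).mp hz
    refine ⟨f, fun j => ?_, fun j hj => ?_, hs⟩
    · exact (iSup_le fun _ => le_rfl : (⨆ (_ : j > n+1), W j) ≤ W j) (hf j)
    · have := hf j
      simpa [not_lt.mpr hj] using this
  have hstab : ∀ ψ : V →+ V, (∀ j, ∀ z ∈ W j, ψ z ∈ W j) → ∀ z ∈ U, ψ z ∈ U := by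
    intro ψ hψ z hz
    obtain ⟨f, hf, hf0, rfl⟩ := hdec z hz
    rw [map_sum]
    refine U.sum_mem fun j _ => ?_
    by_cases hj : j ≤ n + 1
    · rw [hf0 j hj, map_zero]; exact U.zero_mem
    · exact hWU j (not_le.mp hj) (hψ j _ (hf j))
  have hUorth : ∀ z ∈ U, ∀ y ∈ W (n+1), B z y = 0 := by
    intro z hz y hy
    obtain ⟨f, hf, hf0, rfl⟩ := hdec z hz
    rw [map_sum, LinearMap.sum_apply]
    refine Finset.sum_eq_zero fun j _ => ?_
    by_cases hj : j ≤ n + 1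
    · rw [hf0 j hj]; simp
    · exact horth j (n+1) (by omega) _ (hf j) y hy
  have hNU : ∀ k, ∀ z ∈ U, (N ^ k) z ∈ U := fun k =>
    hstab (N ^ k).toAddMonoidHom fun j z hz => hNWk k j z hz
  -- a preimage of `v`
  obtain ⟨w0, hw0U, hw0⟩ : ∃ w0 ∈ U, (N ^ (n+1)) w0 = v := by
    obtain ⟨f, hf, hf0, hs⟩ := hdec v hvW
    have hker : ∀ j, N (f j) = 0 := by
      intro j
      refine hnd j _ (hNW j _ (hf j)) fun y hy => ?_
      have h1 : B (N v) y = 0 := by rw [hvker]; simp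
      rw [← hs, map_sum, map_sum, LinearMap.sum_apply] at h1
      rw [Finset.sum_eq_single j] at h1
      · exact h1
      · intro k _ hk
        exact horth k j hk _ (hNW k _ (hf k)) y hy
      · intro hj
        rw [Finsupp.notMem_support_iff.mp hj]; simp
    have hex : ∀ j, ∃ y ∈ U, (N ^ (n+1)) y = f j := by
      intro j
      by_cases hj : j ≤ n + 1
      · exact ⟨0, U.zero_mem, by rw [hf0 j hj, map_zero]⟩
      · obtain ⟨y, hy, hy'⟩ := hJordanKer j _ (hf j) (hker j)
        refine ⟨(N ^ (j - 1 - (n+1))) y, hWU j (not_le.mp hj) (hNWk _ j y hy), ?_⟩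
        rw [← Module.End.mul_apply, ← pow_add, ← hy']
        congr 2; omega
    choose y hyU hy using hex
    refine ⟨∑ j ∈ f.support, y j, U.sum_mem fun j _ => hyU j, ?_⟩
    rw [map_sum, ← hs]
    exact Finset.sum_congr rfl fun j _ => hy j
  obtain ⟨w1, hw1, hw1φ⟩ := lang_fix p q hp hq K V Φ hφsmul (U ⊓ LinearMap.ker (N ^ (n+1)))
    (by
      rintro z ⟨hz, hz'⟩
      refine ⟨hstab Φ hφW z hz, ?_⟩
      change (N ^ (n+1)) (Φ z) = 0
      rw [← hΦN, LinearMap.mem_ker.mp hz', map_zero]) w0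
    (by
      refine ⟨U.sub_mem (hstab Φ hφW _ hw0U) hw0U, ?_⟩
      change (N ^ (n+1)) _ = 0
      rw [map_sub, ← hΦN, hw0, hΦ, hφv, sub_self])
  obtain ⟨u0, hu0W, hu0⟩ : ∃ u0 ∈ W (n+1), B x u0 = 1 := by
    by_contra hcon
    push Not at hcon
    refine hxne (hnd _ x hxW fun y hy => ?_)
    by_contra hne
    refine hcon ((B x y)⁻¹ • y) ((W _).smul_mem _ hy) ?_
    rw [map_smul, smul_eq_mul, inv_mul_cancel₀ hne]
  have hBx : ∀ y, B x (Φ y) = (B x y) ^ q := by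
    intro y
    rw [← hφB, hφx]; rfl
  obtain ⟨u1, hu1, hu1φ⟩ := lang_fix p q hp hq K V Φ hφsmul (W (n+1) ⊓ LinearMap.ker (B x))
    (by
      rintro z ⟨hz, hz'⟩
      refine ⟨hφW _ z hz, ?_⟩
      change B x (Φ z) = 0
      rw [hBx, LinearMap.mem_ker.mp hz', zero_pow hq0]) u0
    (by
      refine ⟨(W _).sub_mem (hφW _ _ hu0W) hu0W, ?_⟩
      change B x _ = 0
      rw [map_sub, hBx, hu0, one_pow, sub_self])
  have hwU : w0 + w1 ∈ U := U.add_mem hw0U hw1.1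
  have huW : u0 + u1 ∈ W (n+1) := (W _).add_mem hu0W hu1.1
  exact construct_aux q K h2 hqodd.neg_one_pow V B hBnd hsymm Φ hφsmul hφB N hskew hnil hNφ n
    x v (u0 + u1) (w0 + w1) hxker hvker hu1φ hw1φ
    (by rw [map_add, hu0, LinearMap.mem_ker.mp hu1.2, add_zero])
    (hJordanPow _ _ huW)
    (by rw [map_add, hw0, LinearMap.mem_ker.mp hw1.2, add_zero])
    (fun k l => hUorth _ (hNU k _ hwU) _ (hNWk l _ _ huW))
    (fun k => hUorth _ (hNU k _ hwU) _ hxW)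
end
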